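/- arXiv:2406.14771 — 15 statements merged into one kernel-verified Lean document; each statement's English description precedes it below -/
import Mathlib

section
/- Let X be a nonempty Tychonoff (completely regular T1) space with no isolated points which is strongly n-homogeneous for every positive integer n. Then the composition map (f, g) ↦ f ∘ g from Hom_p(X) × Hom_p(X) to Hom_p(X) is not continuous. -/
open Topology

/-- The topology of pointwise convergence on the group of self-homeomorphisms of `X`,
induced by the inclusion of `Hom(X)` into the product space `X → X`. -/
def homPTop (X : Type*) [TopologicalSpace X] : TopologicalSpace (X ≃ₜ X) :=
  TopologicalSpace.induced (fun f => (f : X → X)) inferInstance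

/-- A space `X` is strongly `n`-homogeneous if for any two `n`-sized subsets `A`, `B` of `X`
and any bijection `h : A → B` there is a self-homeomorphism of `X` restricting to `h` on `A`. -/
def StronglyNHomogeneous (X : Type*) [TopologicalSpace X] (n : ℕ) : Prop :=
  ∀ A B : Set X, A.ncard = n → B.ncard = n → ∀ h : X → X, Set.BijOn h A B →
    ∃ f : X ≃ₜ X, Set.EqOn (⇑f) h A

theorem exists_homeo_fix {X : Type*} [TopologicalSpace X]
    (hhom : ∀ n : ℕ, 0 < n → StronglyNHomogeneous X n)
    (F : Set X) (hF : F.Finite) (y z : X) (hy : y ∉ F) (hz : z ∉ F) :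
    ∃ f : X ≃ₜ X, f y = z ∧ ∀ a ∈ F, f a = a := by
  classical
  have h1 := Set.ncard_insert_of_notMem hy hF
  have h2 := Set.ncard_insert_of_notMem hz hF
  have hfix : ∀ a ∈ F, Equiv.swap y z a = a := fun a ha =>
    Equiv.swap_apply_of_ne_of_ne (fun h => hy (h ▸ ha)) (fun h => hz (h ▸ ha))
  have hb : Set.BijOn (Equiv.swap y z) (insert y F) (insert z F) := by
    refine ⟨?_, (Equiv.swap y z).injective.injOn, ?_⟩
    · rintro a (rfl | ha)
      · simp
      · rw [hfix a ha]; exact Or.inr ha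
    · rintro a (rfl | ha)
      · exact ⟨y, Or.inl rfl, by simp⟩
      · exact ⟨a, Or.inr ha, hfix a ha⟩
  obtain ⟨f, hf⟩ := hhom (F.ncard + 1) (Nat.succ_pos _) _ _ h1 h2 _ hb
  refine ⟨f, ?_, fun a ha => ?_⟩
  · rw [hf (Or.inl rfl)]; simp
  · rw [hf (Or.inr ha), hfix a ha]

/-- If a nonempty Tychonoff space `X` has no isolated points and is strongly `n`-homogeneous
for every positive `n`, then composition `(f, g) ↦ f ∘ g` is not continuous on
`Hom_p(X) × Hom_p(X)`. -/
theorem composition_not_continuous_of_stronglyNHomogeneous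
    {X : Type*} [TopologicalSpace X] [T1Space X] [CompletelyRegularSpace X] [Nonempty X]
    (hiso : ∀ x : X, ¬ IsOpen ({x} : Set X))
    (hhom : ∀ n : ℕ, 0 < n → StronglyNHomogeneous X n) :
    ¬ Continuous[@instTopologicalSpaceProd _ _ (homPTop X) (homPTop X), homPTop X]
        (fun p : (X ≃ₜ X) × (X ≃ₜ X) => p.2.trans p.1) := by
  classical
  intro hc
  have hinf : ∀ (U : Set X) (x : X), IsOpen U → x ∈ U → U.Infinite := by
    intro U x hU hx
    have : (𝓝[≠] x).NeBot := by
      rw [Filter.neBot_iff]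
      intro h
      exact hiso x ((isOpen_singleton_iff_punctured_nhds x).2 h)
    exact infinite_of_mem_nhds x (hU.mem_nhds hx)
  obtain ⟨x⟩ := ‹Nonempty X›
  obtain ⟨w, -, hw⟩ := (hinf Set.univ x isOpen_univ trivial).exists_notMem_finite
    (Set.finite_singleton x)
  have hxw : x ≠ w := fun h => hw h.symm
  obtain ⟨U, W, hU, hW, hxU, hwW, hUW⟩ := t2_separation hxw
  letI := homPTop X
  have hev : IsOpen {f : X ≃ₜ X | f x ∈ U} :=
    isOpen_induced_iff.2 ⟨{f : X → X | f x ∈ U}, hU.preimage (continuous_apply x), rfl⟩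
  have hpre := hev.preimage hc
  rw [isOpen_prod_iff] at hpre
  obtain ⟨A, B, hA, hB, hidA, hidB, hAB⟩ := hpre (Homeomorph.refl X) (Homeomorph.refl X) hxU
  obtain ⟨A', hA', rfl⟩ := isOpen_induced_iff.1 hA
  obtain ⟨B', hB', rfl⟩ := isOpen_induced_iff.1 hB
  obtain ⟨I, u, hu, huA⟩ := isOpen_pi_iff.1 hA' _ hidA
  obtain ⟨J, v, hv, hvB⟩ := isOpen_pi_iff.1 hB' _ hidB
  obtain ⟨V, hVo, hxV, hV⟩ : ∃ V : Set X, IsOpen V ∧ x ∈ V ∧ (x ∈ J → V ⊆ v x) := by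
    by_cases hxJ : x ∈ J
    · exact ⟨v x, (hv x hxJ).1, (hv x hxJ).2, fun _ => subset_rfl⟩
    · exact ⟨Set.univ, isOpen_univ, trivial, fun h => absurd h hxJ⟩
  obtain ⟨y, hyV, hy⟩ := (hinf V x hVo hxV).exists_notMem_finite
    (I.finite_toSet.union (J.finite_toSet.subset (Set.diff_subset (t := {x}))))
  obtain ⟨z, hzW, hz⟩ := (hinf W w hW hwW).exists_notMem_finite I.finite_toSet
  obtain ⟨f, hfy, hf⟩ := exists_homeo_fix hhom (↑I) I.finite_toSet y z (fun h => hy (Or.inl h)) hz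
  obtain ⟨g, hgx, hg⟩ := exists_homeo_fix hhom (↑J \ {x}) (J.finite_toSet.subset Set.diff_subset)
    x y (fun h => h.2 rfl) (fun h => hy (Or.inr h))
  have hmem : (f, g) ∈ ((fun f : X ≃ₜ X => (f : X → X)) ⁻¹' A') ×ˢ
      ((fun f : X ≃ₜ X => (f : X → X)) ⁻¹' B') := by
    refine ⟨huA fun a ha => ?_, hvB fun b hb => ?_⟩
    · show f a ∈ u a
      rw [hf a ha]; exact (hu a ha).2
    · show g b ∈ v b
      by_cases hbx : b = x
      · subst hbx
        rw [hgx]; exact hV hb hyV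
      · rw [hg b ⟨hb, hbx⟩]; exact (hv b hb).2
  have h3 : f (g x) ∈ U := hAB hmem
  rw [hgx, hfy] at h3
  exact Set.disjoint_left.1 hUW h3 hzW
end

section
/- Let X be a nonempty Tychonoff (completely regular T1) space with no isolated points which is strongly n-homogeneous for every positive integer n. Then the inversion map f ↦ f⁻¹ from Hom_p(X) to Hom_p(X) is not continuous. -/
open Topology

/-- If a nonempty Tychonoff space `X` has no isolated points and is strongly `n`-homogeneous
for every positive `n`, then inversion `f ↦ f⁻¹` is not continuous on `Hom_p(X)`. -/
theorem inversion_not_continuous_of_stronglyNHomogeneous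
    {X : Type*} [TopologicalSpace X] [T1Space X] [CompletelyRegularSpace X] [Nonempty X]
    (hiso : ∀ x : X, ¬ IsOpen ({x} : Set X))
    (hhom : ∀ n : ℕ, 0 < n → StronglyNHomogeneous X n) :
    ¬ Continuous[homPTop X, homPTop X] (fun f : X ≃ₜ X => f.symm) := by
  classical
  intro hc
  haveI : T35Space X := {}
  have hne : ∀ x : X, (𝓝[≠] x).NeBot := fun x => by
    rw [Filter.neBot_iff, Ne, ← isOpen_singleton_iff_punctured_nhds]
    exact hiso x
  obtain ⟨x0⟩ := ‹Nonempty X›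
  haveI := hne x0
  obtain ⟨y0, hy0⟩ : ∃ y, y ≠ x0 := by
    by_contra hcon
    push Not at hcon
    apply hiso x0
    have : ({x0} : Set X) = Set.univ := by
      ext y; simp [hcon y]
    rw [this]; exact isOpen_univ
  obtain ⟨W, U, hW, hU, hyW, hxU, hd⟩ := t2_separation hy0
  let V : Set (X ≃ₜ X) := {f | f x0 ∈ U}
  have hev : Continuous[homPTop X, _] (fun f : X ≃ₜ X => f x0) := by
    letI := homPTop X
    exact (continuous_apply x0).comp
      (continuous_induced_dom (f := fun f : X ≃ₜ X => (f : X → X)))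
  have hP : (fun f : X ≃ₜ X => f.symm x0) ⁻¹' U ∈ @nhds _ (homPTop X) (Homeomorph.refl X) := by
    letI := homPTop X
    have h2 : Continuous (fun f : X ≃ₜ X => f.symm x0) := hev.comp hc
    exact (hU.preimage h2).mem_nhds (by simpa using hxU)
  unfold homPTop at hP
  rw [nhds_induced, Filter.mem_comap] at hP
  obtain ⟨S, hS, hSP⟩ := hP
  rw [nhds_pi, Filter.mem_pi] at hS
  obtain ⟨I, hI, t, ht, hIt⟩ := hS
  haveI := hne y0
  obtain ⟨y, hyW', hyI⟩ := (infinite_of_mem_nhds y0 (hW.mem_nhds hyW)).exists_notMem_finite hI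
  have hyx : y ≠ x0 := fun h => Set.disjoint_left.1 hd hyW' (h ▸ hxU)
  have hfin : (I ∪ {x0, y}).Finite := hI.union (by simp)
  obtain ⟨z, hzt, hzI⟩ :=
    (infinite_of_mem_nhds x0 (ht x0)).exists_notMem_finite hfin
  let h : X → X := fun x => if x = y then x0 else if x = x0 then z else x
  have hinj : Set.InjOn h (I ∪ {x0, y}) := by
    intro a ha b hb hab
    simp only [h] at hab
    have hza : z ≠ a := fun e => hzI (e ▸ ha)
    have hzb : z ≠ b := fun e => hzI (e ▸ hb)
    have hz0 : z ≠ x0 := fun e => hzI (by simp [e])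
    split_ifs at hab <;> grind
  have hpos : 0 < (I ∪ {x0, y}).ncard :=
    (Set.ncard_pos hfin).2 ⟨x0, by simp⟩
  obtain ⟨f, hf⟩ := hhom _ hpos (I ∪ {x0, y}) (h '' (I ∪ {x0, y})) rfl
    (Set.ncard_image_of_injOn hinj) h hinj.bijOn_image
  have hfS : (f : X → X) ∈ S := by
    apply hIt
    intro x hx
    rw [hf (Or.inl hx)]
    have hxy : x ≠ y := fun e => hyI (e ▸ hx)
    simp only [h, if_neg hxy]
    split_ifs with h0
    · rw [h0]; exact hzt
    · exact mem_of_mem_nhds (ht x)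
  have h1 : f.symm x0 ∈ U := hSP hfS
  have h2 : f y = x0 := by
    rw [hf (by simp)]; simp [h]
  rw [← h2, Homeomorph.symm_apply_apply] at h1
  exact Set.disjoint_left.1 hd hyW' h1
end

section
/- Let X be a nonempty Tychonoff (completely regular T1) space with no isolated points which is strongly n-homogeneous for every positive integer n. Then Hom_p(X) is not a topological group (i.e., it is not the case that composition is jointly continuous and inversion is continuous). -/
open Topology

/-- If a nonempty Tychonoff space `X` has no isolated points and is strongly `n`-homogeneous
for every positive `n`, then `Hom_p(X)` is not a topological group: it is not the case that
composition is jointly continuous and inversion is continuous. -/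
theorem homP_not_topologicalGroup_of_stronglyNHomogeneous
    {X : Type*} [TopologicalSpace X] [T1Space X] [CompletelyRegularSpace X] [Nonempty X]
    (hiso : ∀ x : X, ¬ IsOpen ({x} : Set X))
    (hhom : ∀ n : ℕ, 0 < n → StronglyNHomogeneous X n) :
    ¬ (Continuous[@instTopologicalSpaceProd _ _ (homPTop X) (homPTop X), homPTop X]
          (fun p : (X ≃ₜ X) × (X ≃ₜ X) => p.2.trans p.1) ∧
       Continuous[homPTop X, homPTop X] (fun f : X ≃ₜ X => f.symm)) := by
  classical
  rintro ⟨-, hinv⟩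
  have hne : ∀ x : X, Filter.NeBot (𝓝[≠] x) := fun x =>
    ⟨fun h => hiso x ((isOpen_singleton_iff_punctured_nhds x).2 h)⟩
  obtain ⟨x⟩ := ‹Nonempty X›
  have hinf : ∀ (y : X) (V : Set X), IsOpen V → y ∈ V → V.Infinite := fun y V hV hy => by
    haveI := hne y
    exact infinite_of_mem_nhds y (hV.mem_nhds hy)
  obtain ⟨w, -, hw⟩ := (hinf x Set.univ isOpen_univ trivial).exists_notMem_finset {x}
  have hwx : x ≠ w := fun h => hw (by simp [h])
  haveI : T35Space X := {}
  obtain ⟨U, W, hU, hW, hxU, hwW, hUW⟩ := t2_separation hwx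
  have ho : IsOpen[homPTop X] {g : X ≃ₜ X | g x ∈ U} :=
    isOpen_induced_iff.2 ⟨{g | g x ∈ U}, hU.preimage (continuous_apply x), rfl⟩
  have ho2 := (@continuous_def _ _ (homPTop X) (homPTop X) _).1 hinv _ ho
  obtain ⟨O, hO, hOe⟩ := isOpen_induced_iff.1 ho2
  have hmem : ∀ f : X ≃ₜ X, (f : X → X) ∈ O ↔ f.symm x ∈ U := fun f => Set.ext_iff.1 hOe f
  have hid : ((Homeomorph.refl X : X ≃ₜ X) : X → X) ∈ O := (hmem _).2 hxU
  obtain ⟨I, u, hu, hIu⟩ := isOpen_pi_iff.1 hO _ hid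
  obtain ⟨V, hV, hxV, hVu⟩ : ∃ V : Set X, IsOpen V ∧ x ∈ V ∧ (x ∈ I → V ⊆ u x) := by
    by_cases h : x ∈ I
    · exact ⟨u x, (hu x h).1, (hu x h).2, fun _ => subset_rfl⟩
    · exact ⟨Set.univ, isOpen_univ, trivial, fun h' => absurd h' h⟩
  obtain ⟨z, hzW, hz⟩ := (hinf w W hW hwW).exists_notMem_finset (insert x I)
  obtain ⟨x', hxV', hx'⟩ := (hinf x V hV hxV).exists_notMem_finset (insert z (insert x I))
  simp only [Finset.mem_insert, not_or] at hz hx'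
  let h : Equiv.Perm X := Equiv.swap x z * Equiv.swap x x'
  let A : Finset X := insert z (insert x I)
  have hA : 0 < A.card := Finset.card_pos.2 ⟨z, Finset.mem_insert_self _ _⟩
  obtain ⟨f, hf⟩ := hhom A.card hA (A : Set X) (h '' (A : Set X)) (Set.ncard_coe_finset A)
    (by rw [Set.ncard_image_of_injective _ h.injective, Set.ncard_coe_finset]) h
    (h.injective.injOn.bijOn_image)
  have hfz : f z = x := by
    rw [hf (by simp [A])]
    simp [h, Equiv.swap_apply_of_ne_of_ne hz.1 (Ne.symm hx'.1)]
  have hfx : f x = x' := by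
    rw [hf (by simp [A])]
    simp [h, Equiv.swap_apply_of_ne_of_ne hx'.2.1 hx'.1]
  have hfy : ∀ y ∈ I, y ≠ x → f y = y := by
    intro y hy hyx
    rw [hf (by simp [A, hy])]
    have h1 : y ≠ x' := fun e => hx'.2.2 (e ▸ hy)
    have h2 : y ≠ z := fun e => hz.2 (e ▸ hy)
    simp [h, Equiv.swap_apply_of_ne_of_ne hyx h1, Equiv.swap_apply_of_ne_of_ne hyx h2]
  have hfO : (f : X → X) ∈ O := by
    apply hIu
    intro y hy
    by_cases hyx : y = x
    · subst hyx
      rw [hfx]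
      exact hVu hy hxV'
    · rw [hfy y hy hyx]
      exact (hu y hy).2
  have hzU := (hmem f).1 hfO
  rw [← hfz, Homeomorph.symm_apply_apply] at hzU
  exact Set.disjoint_left.1 hUW hzU hzW
end

section
/- For every Tychonoff (completely regular T1) space X there exist a Tychonoff space Y and a closed embedding e : X → Y such that: (i) every self-homeomorphism f of X extends over e, i.e. there is a self-homeomorphism g of Y with g ∘ e = e ∘ f; and (ii) Hom_p(Y) is a topological group. -/
open Topology

universe u

/-- `Hom_p(X)` is a topological group: composition is jointly continuous and inversion
is continuous, with respect to the topology of pointwise convergence. -/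
def IsTopGroupHomP (Y : Type*) [TopologicalSpace Y] : Prop :=
  Continuous[@instTopologicalSpaceProd _ _ (homPTop Y) (homPTop Y), homPTop Y]
      (fun p : (Y ≃ₜ Y) × (Y ≃ₜ Y) => p.2.trans p.1) ∧
  Continuous[homPTop Y, homPTop Y] (fun f : Y ≃ₜ Y => f.symm)


inductive YS (X : Type u) : Type u
  | pt (x : X) : YS X
  | ray (i : X × ℝ) (s : ℝ) : YS X

namespace YS

variable {X : Type u}

open Classical in
noncomputable def co : YS X → (X × ℝ → ℝ)
  | pt _ => fun _ => 0
  | ray i s => Pi.single i (Real.exp s)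

def pr : YS X → X
  | pt x => x
  | ray i _ => i.1

noncomputable def phi (y : YS X) : X × (X × ℝ → ℝ) := (pr y, co y)

lemma co_ray_self (i : X × ℝ) (s : ℝ) : co (ray i s) i = Real.exp s := by simp [co]

lemma co_ray_ne {i j : X × ℝ} (h : j ≠ i) (s : ℝ) : co (ray i s) j = 0 := by simp [co, h]

lemma exists_of_pos {y : YS X} {i : X × ℝ} (h : 0 < co y i) : ∃ s, y = ray i s := by
  cases y with
  | pt x => simp [co] at h
  | ray j s =>
    by_cases hij : i = j
    · exact ⟨s, by rw [hij]⟩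
    · rw [co_ray_ne hij] at h; exact absurd h (lt_irrefl _)

lemma phi_inj : Function.Injective (phi (X := X)) := by
  intro y z h
  have h1 : pr y = pr z := congrArg Prod.fst h
  have h2 : co y = co z := congrArg Prod.snd h
  cases y with
  | ray i s =>
    have h3 : co z i = Real.exp s := by rw [← h2, co_ray_self]
    obtain ⟨t, rfl⟩ := exists_of_pos (h3 ▸ Real.exp_pos s)
    rw [co_ray_self] at h3
    rw [Real.exp_injective h3]
  | pt x =>
    cases z with
    | pt x' => exact congrArg pt h1
    | ray i s =>
      have h3 : co (pt x) i = Real.exp s := by rw [h2, co_ray_self]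
      simp only [co] at h3
      exact absurd h3.symm (Real.exp_pos s).ne'

variable [TopologicalSpace X]

noncomputable instance : TopologicalSpace (YS X) := TopologicalSpace.induced phi inferInstance

lemma cont_phi : Continuous (phi (X := X)) := continuous_induced_dom
lemma cont_pr : Continuous (pr (X := X)) := cont_phi.fst
lemma cont_co (i : X × ℝ) : Continuous (fun y : YS X => co y i) :=
  (continuous_apply i).comp cont_phi.snd

lemma emb_phi : IsEmbedding (phi (X := X)) := ⟨⟨rfl⟩, phi_inj⟩

lemma tendsto_iff {α : Type*} {l : Filter α} {g : α → YS X} {y : YS X} :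
    Filter.Tendsto g l (𝓝 y) ↔ Filter.Tendsto (fun a => pr (g a)) l (𝓝 (pr y)) ∧
      ∀ i, Filter.Tendsto (fun a => co (g a) i) l (𝓝 (co y i)) := by
  rw [emb_phi.tendsto_nhds_iff, ← tendsto_pi_nhds]
  exact Prod.tendsto_iff _ _

lemma cont_pt : Continuous (pt (X := X)) := by
  rw [continuous_iff_continuousAt]
  intro x
  exact tendsto_iff.2 ⟨Filter.tendsto_id, fun i => tendsto_const_nhds⟩

lemma cont_ray (i : X × ℝ) : Continuous (ray i) := by
  rw [continuous_iff_continuousAt]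
  intro s
  refine tendsto_iff.2 ⟨tendsto_const_nhds, fun j => ?_⟩
  by_cases h : j = i
  · subst h
    simp only [co_ray_self]
    exact Real.continuous_exp.continuousAt
  · simp only [co_ray_ne h]
    exact tendsto_const_nhds

lemma isOpen_rayset (i : X × ℝ) : IsOpen (Set.range (ray i)) := by
  have : Set.range (ray i) = {y | 0 < co y i} := by
    ext y
    constructor
    · rintro ⟨s, rfl⟩
      simp only [Set.mem_setOf_eq, co_ray_self]
      exact Real.exp_pos s
    · intro h
      obtain ⟨s, rfl⟩ := exists_of_pos h
      exact ⟨s, rfl⟩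
  rw [this]
  exact isOpen_lt continuous_const (cont_co i)

lemma ray_inj (i : X × ℝ) : Function.Injective (ray i) := by
  intro s t h; injection h

noncomputable def par (i : X × ℝ) (y : YS X) : ℝ := Real.log (co y i)

lemma par_ray (i : X × ℝ) (s : ℝ) : par i (ray i s) = s := by
  simp [par, co_ray_self]

lemma cont_par (i : X × ℝ) {y : YS X} (hy : y ∈ Set.range (ray i)) :
    ContinuousAt (par i) y := by
  obtain ⟨s, rfl⟩ := hy
  refine ContinuousAt.log (cont_co i).continuousAt ?_
  rw [co_ray_self]
  exact (Real.exp_pos s).ne'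

lemma nhds_ray (i : X × ℝ) (s : ℝ) : 𝓝 (ray i s) = Filter.map (ray i) (𝓝 s) := by
  apply le_antisymm
  · intro U hU
    have h1 : Filter.Tendsto (par i) (𝓝 (ray i s)) (𝓝 s) := by
      have := cont_par i ⟨s, rfl⟩
      rwa [ContinuousAt, par_ray] at this
    filter_upwards [h1 hU, (isOpen_rayset i).mem_nhds ⟨s, rfl⟩]
    rintro _ hy ⟨t, rfl⟩
    simpa [par_ray] using hy
  · exact (cont_ray i).continuousAt

lemma isOpen_rays : IsOpen (Set.range (pt (X := X)))ᶜ := by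
  have : (Set.range (pt (X := X)))ᶜ = ⋃ i, Set.range (ray i) := by
    ext y
    cases y <;> simp
  rw [this]
  exact isOpen_iUnion isOpen_rayset

lemma closedEmb_pt : IsClosedEmbedding (pt (X := X)) := by
  refine ⟨?_, ⟨isOpen_rays⟩⟩
  exact IsEmbedding.of_comp cont_pt cont_pr (by exact IsEmbedding.id)

noncomputable def liftFun (f : X → X) : YS X → YS X
  | pt x => pt (f x)
  | ray i s => ray (f i.1, i.2) s

lemma cont_lift (f : X ≃ₜ X) : Continuous (liftFun f) := by
  rw [continuous_iff_continuousAt]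
  intro y
  refine tendsto_iff.2 ⟨?_, fun j => ?_⟩
  · have h : ∀ z : YS X, pr (liftFun f z) = f (pr z) := by intro z; cases z <;> rfl
    simp only [h]
    exact (f.continuous.comp cont_pr).continuousAt
  · have h : ∀ z : YS X, co (liftFun f z) j = co z (f.symm j.1, j.2) := by
      intro z
      cases z with
      | pt x => rfl
      | ray i s =>
        by_cases hj : j = (f i.1, i.2)
        · subst hj
          simp [liftFun, co_ray_self]
        · have h2 : (f.symm j.1, j.2) ≠ i := by
            rintro rfl
            simp at hj
          simp only [liftFun]
          rw [co_ray_ne hj, co_ray_ne h2]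
    simp only [h]
    exact (cont_co _).continuousAt

noncomputable def liftHomeo (f : X ≃ₜ X) : YS X ≃ₜ YS X where
  toFun := liftFun f
  invFun := liftFun f.symm
  left_inv y := by cases y <;> simp [liftFun]
  right_inv y := by cases y <;> simp [liftFun]
  continuous_toFun := cont_lift f
  continuous_invFun := cont_lift f.symm

instance [T1Space X] : T1Space (YS X) := emb_phi.t1Space

lemma creg [CompletelyRegularSpace X] : CompletelyRegularSpace (YS X) :=
  emb_phi.isInducing.completelyRegularSpace

lemma ray_cg (i : X × ℝ) (s : ℝ) : (𝓝 (ray i s)).IsCountablyGenerated := by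
  rw [nhds_ray]; infer_instance

lemma pt_not_cg [T1Space X] (x : X) : ¬ (𝓝 (pt x)).IsCountablyGenerated := by
  intro h
  have ht : Filter.Tendsto (fun r : ℝ => ray (x, r) 0) Filter.cofinite (𝓝 (pt x)) := by
    refine tendsto_iff.2 ⟨tendsto_const_nhds, fun j => ?_⟩
    apply tendsto_const_nhds.congr'
    have : ∀ᶠ r : ℝ in Filter.cofinite, r ≠ j.2 := by simp
    filter_upwards [this] with r hr
    rw [co_ray_ne]
    · rfl
    · rintro rfl
      exact hr rfl
  have h2 := ht.countable_compl_preimage_ker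
  rw [ker_nhds] at h2
  have h3 : ((fun r : ℝ => ray (x, r) 0) ⁻¹' {pt x})ᶜ = Set.univ := by
    ext r; simp
  rw [h3] at h2
  exact Cardinal.not_countable_real h2

lemma cg_homeo (f : YS X ≃ₜ YS X) {y : YS X} (h : (𝓝 y).IsCountablyGenerated) :
    (𝓝 (f y)).IsCountablyGenerated := by
  rw [← f.map_nhds_eq]; infer_instance

lemma map_ray [T1Space X] (f : YS X ≃ₜ YS X) (i : X × ℝ) (s : ℝ) :
    ∃ j t, f (ray i s) = ray j t := by
  have h := cg_homeo f (ray_cg i s)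
  cases hy : f (ray i s) with
  | pt x => rw [hy] at h; exact absurd h (pt_not_cg x)
  | ray j t => exact ⟨j, t, rfl⟩

lemma map_pt [T1Space X] (f : YS X ≃ₜ YS X) (x : X) : ∃ x', f (pt x) = pt x' := by
  cases hy : f (pt x) with
  | pt x' => exact ⟨x', rfl⟩
  | ray j t =>
    obtain ⟨k, u, h⟩ := map_ray f.symm j t
    rw [← hy, f.symm_apply_apply] at h
    cases h

lemma map_ray_all [T1Space X] (f : YS X ≃ₜ YS X) {i j : X × ℝ} {s : ℝ}
    (h : f (ray i s) ∈ Set.range (ray j)) (s' : ℝ) : f (ray i s') ∈ Set.range (ray j) := by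
  choose J T hJ using map_ray f i
  have hl : IsLocallyConstant J := by
    rw [IsLocallyConstant.iff_eventually_eq]
    intro a
    have : ∀ᶠ b in 𝓝 a, f (ray i b) ∈ Set.range (ray (J a)) :=
      (f.continuous.comp (cont_ray i)).continuousAt
        ((isOpen_rayset (J a)).mem_nhds ⟨T a, (hJ a).symm⟩)
    filter_upwards [this] with b hb
    obtain ⟨t, ht⟩ := hb
    rw [hJ b] at ht
    injection ht with h1 _
    exact h1.symm
  have h1 : J s' = J s := hl.apply_eq_of_preconnectedSpace s' s
  obtain ⟨t, ht⟩ := h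
  rw [hJ s] at ht
  injection ht with h2 _
  rw [hJ s', h1, ← h2]
  exact ⟨_, rfl⟩

lemma map_pt_eq [T2Space X] (f : YS X ≃ₜ YS X) {i j : X × ℝ} {s : ℝ}
    (h : f (ray i s) ∈ Set.range (ray j)) : f (pt i.1) = pt j.1 := by
  obtain ⟨x', hx'⟩ := map_pt f i.1
  have ht : Filter.Tendsto (ray i) Filter.atBot (𝓝 (pt i.1)) := by
    refine tendsto_iff.2 ⟨tendsto_const_nhds, fun k => ?_⟩
    by_cases hk : k = i
    · subst hk
      simp only [co_ray_self]
      exact Real.tendsto_exp_atBot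
    · simp only [co_ray_ne hk]
      exact tendsto_const_nhds
  have h2 : Filter.Tendsto (fun s => pr (f (ray i s))) Filter.atBot (𝓝 (pr (f (pt i.1)))) :=
    ((cont_pr.comp f.continuous).tendsto _).comp ht
  have h3 : (fun s => pr (f (ray i s))) = fun _ => j.1 := by
    funext s'
    obtain ⟨t, ht⟩ := map_ray_all f h s'
    rw [← ht]; rfl
  rw [h3, hx'] at h2
  rw [hx', tendsto_nhds_unique tendsto_const_nhds h2]
  rfl

/-- On a ray a homeomorphism is given by a continuous injective real function. -/
lemma exists_h [T1Space X] (f : YS X ≃ₜ YS X) {i j : X × ℝ} {s : ℝ}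
    (h : f (ray i s) ∈ Set.range (ray j)) :
    ∃ g : ℝ → ℝ, Continuous g ∧ (StrictMono g ∨ StrictAnti g) ∧ ∀ t, f (ray i t) = ray j (g t) := by
  choose g hg using map_ray_all f h
  have hc : Continuous g := by
    rw [continuous_iff_continuousAt]
    intro t
    have h1 : g = fun t => par j (f (ray i t)) := by
      funext t; rw [← hg, par_ray]
    rw [h1]
    exact ContinuousAt.comp (g := par j) (f := fun t => f (ray i t))
      (cont_par j ⟨_, hg t⟩) (f.continuous.comp (cont_ray i)).continuousAt
  refine ⟨g, hc, hc.strictMono_of_inj ?_, fun t => (hg t).symm⟩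
  intro a b hab
  apply ray_inj i
  apply f.injective
  rw [← hg a, ← hg b, hab]

lemma par_mem {j : X × ℝ} {y : YS X} (hy : y ∈ Set.range (ray j)) : y = ray j (par j y) := by
  obtain ⟨s, rfl⟩ := hy
  rw [par_ray]

attribute [local instance] homPTop

lemma cont_eval (y : YS X) : Continuous (fun f : YS X ≃ₜ YS X => f y) :=
  (continuous_apply y).comp continuous_induced_dom

lemma ev_ray (f₀ : YS X ≃ₜ YS X) {i j : X × ℝ} {s : ℝ}
    (h : f₀ (ray i s) ∈ Set.range (ray j)) :
    ∀ᶠ f in 𝓝 f₀, f (ray i s) ∈ Set.range (ray j) :=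
  (cont_eval (ray i s)).continuousAt ((isOpen_rayset j).mem_nhds h)

lemma tendsto_par (f₀ : YS X ≃ₜ YS X) {i j : X × ℝ} {s : ℝ}
    (h : f₀ (ray i s) ∈ Set.range (ray j)) :
    Filter.Tendsto (fun f : YS X ≃ₜ YS X => par j (f (ray i s))) (𝓝 f₀)
      (𝓝 (par j (f₀ (ray i s)))) :=
  (cont_par j h).tendsto.comp (cont_eval (ray i s)).continuousAt

lemma ev_pt [T2Space X] (f₀ : YS X ≃ₜ YS X) (x : X) :
    ∀ᶠ f in 𝓝 f₀, f (pt x) = f₀ (pt x) := by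
  obtain ⟨j, t, h⟩ := map_ray f₀ (x, 0) 0
  have h0 : f₀ (ray (x, 0) 0) ∈ Set.range (ray j) := ⟨t, h.symm⟩
  filter_upwards [ev_ray f₀ h0] with f hf
  exact (map_pt_eq f hf).trans (map_pt_eq f₀ h0).symm

lemma eval_joint [T1Space X] (f₀ : YS X ≃ₜ YS X) (i : X × ℝ) (s : ℝ) :
    Filter.Tendsto (fun p : (YS X ≃ₜ YS X) × YS X => p.1 p.2) (𝓝 f₀ ×ˢ 𝓝 (ray i s))
      (𝓝 (f₀ (ray i s))) := by
  obtain ⟨j, t, h⟩ := map_ray f₀ i s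
  have h0 : f₀ (ray i s) ∈ Set.range (ray j) := ⟨t, h.symm⟩
  obtain ⟨g₀, hc₀, -, hg₀⟩ := exists_h f₀ h0
  rw [hg₀ s, nhds_ray j]
  intro U hU
  obtain ⟨c, d, hcd, hcdU⟩ := mem_nhds_iff_exists_Ioo_subset.1 (Filter.mem_map.1 hU)
  have h1 : g₀ ⁻¹' Set.Ioo c d ∈ 𝓝 s := hc₀.continuousAt (isOpen_Ioo.mem_nhds hcd)
  obtain ⟨ε, hε, hball⟩ := Metric.nhds_basis_closedBall.mem_iff.1 h1
  rw [Real.closedBall_eq_Icc] at hball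
  have key : ∀ a, g₀ a ∈ Set.Ioo c d → ∀ᶠ f in 𝓝 f₀, par j (f (ray i a)) ∈ Set.Ioo c d := by
    intro a ha
    refine tendsto_par f₀ (map_ray_all f₀ h0 a) (isOpen_Ioo.mem_nhds ?_)
    rwa [hg₀, par_ray]
  have hA := key (s - ε) (hball ⟨le_rfl, by linarith⟩)
  have hB := key (s + ε) (hball ⟨by linarith, le_rfl⟩)
  have hI : ray i '' Set.Icc (s - ε) (s + ε) ∈ 𝓝 (ray i s) := by
    rw [nhds_ray]
    exact Filter.image_mem_map (Icc_mem_nhds (by linarith) (by linarith))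
  have hev : ∀ᶠ p in 𝓝 f₀ ×ˢ 𝓝 (ray i s), p.1 p.2 ∈ U := by
    filter_upwards [((ev_ray f₀ h0).and (hA.and hB)).prod_mk hI]
    rintro ⟨f, y⟩ ⟨⟨hf, ha, hb⟩, ⟨r, hr, hry⟩⟩
    dsimp only at hf ha hb hry ⊢
    subst hry
    obtain ⟨g, -, hm, hg⟩ := exists_h f hf
    rw [hg, par_ray] at ha hb
    rw [hg]
    apply hcdU
    rcases hm with hm | hm
    · exact ⟨ha.1.trans_le (hm.monotone hr.1), (hm.monotone hr.2).trans_lt hb.2⟩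
    · exact ⟨hb.1.trans_le (hm.antitone hr.2), (hm.antitone hr.1).trans_lt ha.2⟩
  exact hev

lemma inv_ray [T1Space X] (f₀ : YS X ≃ₜ YS X) (i j : X × ℝ) (s u : ℝ)
    (h : f₀ (ray i s) = ray j u) :
    Filter.Tendsto (fun f : YS X ≃ₜ YS X => f.symm (ray j u)) (𝓝 f₀) (𝓝 (ray i s)) := by
  have h0 : f₀ (ray i s) ∈ Set.range (ray j) := ⟨u, h.symm⟩
  obtain ⟨g₀, hc₀, hm₀, hg₀⟩ := exists_h f₀ h0
  have hu : g₀ s = u := by rw [hg₀] at h; exact ray_inj j h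
  rw [nhds_ray]
  intro U hU
  obtain ⟨ε, hε, hball⟩ := Metric.nhds_basis_closedBall.mem_iff.1 (Filter.mem_map.1 hU)
  rw [Real.closedBall_eq_Icc] at hball
  have hlim := ((tendsto_par f₀ (map_ray_all f₀ h0 (s - ε))).sub_const u).mul
    ((tendsto_par f₀ (map_ray_all f₀ h0 (s + ε))).sub_const u)
  have hneg : (par j (f₀ (ray i (s - ε))) - u) * (par j (f₀ (ray i (s + ε))) - u) < 0 := by
    rw [hg₀, hg₀, par_ray, par_ray, ← hu]
    rcases hm₀ with hm | hm
    · have h1 : g₀ (s - ε) < g₀ s := hm (by linarith)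
      have h2 : g₀ s < g₀ (s + ε) := hm (by linarith)
      exact mul_neg_of_neg_of_pos (by linarith) (by linarith)
    · have h1 : g₀ s < g₀ (s - ε) := hm (by linarith)
      have h2 : g₀ (s + ε) < g₀ s := hm (by linarith)
      exact mul_neg_of_pos_of_neg (by linarith) (by linarith)
  have hev : ∀ᶠ f in 𝓝 f₀, f.symm (ray j u) ∈ U := by
    filter_upwards [ev_ray f₀ h0, hlim (isOpen_Iio.mem_nhds hneg)] with f hf hn
    obtain ⟨g, hc, -, hg⟩ := exists_h f hf
    simp only [Set.mem_preimage, Set.mem_Iio, hg, par_ray] at hn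
    have hmem : u ∈ Set.uIcc (g (s - ε)) (g (s + ε)) := by
      rw [Set.mem_uIcc]
      rcases mul_neg_iff.1 hn with h | h
      · right; constructor <;> linarith
      · left; constructor <;> linarith
    obtain ⟨r, hr, hru⟩ := intermediate_value_uIcc hc.continuousOn hmem
    rw [Set.uIcc_of_le (by linarith)] at hr
    have : f.symm (ray j u) = ray i r := by
      rw [← hru, ← hg, f.symm_apply_apply]
    rw [this]
    exact hball hr
  exact hev

lemma isTopGroup [T2Space X] : IsTopGroupHomP (YS X) := by
  constructor
  · refine continuous_induced_rng.2 (continuous_pi fun y => ?_)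
    rw [continuous_iff_continuousAt]
    rintro ⟨f₀, g₀⟩
    change Filter.Tendsto (fun p : (YS X ≃ₜ YS X) × (YS X ≃ₜ YS X) => p.1 (p.2 y))
      (𝓝 (f₀, g₀)) (𝓝 (f₀ (g₀ y)))
    rw [nhds_prod_eq]
    cases y with
    | pt x =>
      obtain ⟨x', hx'⟩ := map_pt g₀ x
      apply tendsto_const_nhds.congr'
      filter_upwards [(ev_pt f₀ x').prod_mk (ev_pt g₀ x)] with p hp
      rw [hp.2, hx', hp.1]
    | ray i s =>
      obtain ⟨j, t, h⟩ := map_ray g₀ i s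
      have h1 := eval_joint f₀ j t
      rw [← h] at h1
      exact h1.comp (Filter.tendsto_id.prodMap (cont_eval (ray i s)).continuousAt)
  · refine continuous_induced_rng.2 (continuous_pi fun y => ?_)
    rw [continuous_iff_continuousAt]
    intro f₀
    change Filter.Tendsto (fun f : YS X ≃ₜ YS X => f.symm y) (𝓝 f₀) (𝓝 (f₀.symm y))
    cases y with
    | pt x =>
      obtain ⟨x', hx'⟩ := map_pt f₀.symm x
      have hx : f₀ (pt x') = pt x := by rw [← hx', f₀.apply_symm_apply]
      apply tendsto_const_nhds.congr'
      filter_upwards [ev_pt f₀ x'] with f hf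
      rw [hx', f.eq_symm_apply, hf, hx]
    | ray j u =>
      obtain ⟨i, s, h⟩ := map_ray f₀.symm j u
      rw [h]
      exact inv_ray f₀ i j s u (by rw [← h, f₀.apply_symm_apply])

end YS

theorem exists_closedEmbedding_homP_topologicalGroup
    (X : Type u) [TopologicalSpace X] [T1Space X] [CompletelyRegularSpace X] :
    ∃ (Y : Type u) (tY : TopologicalSpace Y),
      @T1Space Y tY ∧ @CompletelyRegularSpace Y tY ∧
      ∃ e : X → Y,
        @Topology.IsClosedEmbedding X Y _ tY e ∧
        (∀ f : X ≃ₜ X, ∃ g : @Homeomorph Y Y tY tY, ∀ x : X, g (e x) = e (f x)) ∧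
        @IsTopGroupHomP Y tY := by
  exact ⟨YS X, inferInstance, inferInstance, YS.creg, YS.pt, YS.closedEmb_pt,
    fun f => ⟨YS.liftHomeo f, fun _ => rfl⟩, YS.isTopGroup⟩
end

section
/- For any topological space X, the map x ↦ 0_x is a closed embedding of X into its Alexandroff Noodles XI: it is a homeomorphism of X onto the subspace O_X = {0_x : x ∈ X}, and O_X is closed in XI. -/
open Topology unitInterval

/-- The canonical projection sending `Sum.inl x` to `(x, 0)` and `Sum.inr p` to `p`;
its kernel is exactly the equivalence relation identifying each `x ∈ X` with `(x, 0)`. -/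
def noodleProj (X : Type*) : X ⊕ (X × unitInterval) → X × unitInterval
  | Sum.inl x => (x, 0)
  | Sum.inr p => p

/-- The equivalence relation on `X ⊕ (X × [0,1])` identifying each `x ∈ X` with `(x, 0)`. -/
def noodleSetoid (X : Type*) : Setoid (X ⊕ (X × unitInterval)) := Setoid.ker (noodleProj X)

/-- The Alexandroff Noodles of `X`: the quotient of the sum of `X` and `D × [0,1]`
(`D` the underlying set of `X`) identifying each `x ∈ X` with `(x, 0)`. -/
def Noodles (X : Type*) : Type _ := Quotient (noodleSetoid X)

/-- The topology of the sum of `X` and `D × [0,1]`, where `D` is the underlying set of `X`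
with the discrete topology. -/
def noodleSumTop (X : Type*) [t : TopologicalSpace X] :
    TopologicalSpace (X ⊕ (X × unitInterval)) :=
  @instTopologicalSpaceSum X (X × unitInterval) t
    (@instTopologicalSpaceProd X unitInterval ⊥ inferInstance)

/-- The Alexandroff Noodles carry the quotient topology. -/
instance noodlesTop (X : Type*) [TopologicalSpace X] : TopologicalSpace (Noodles X) :=
  (noodleSumTop X).coinduced (Quotient.mk (noodleSetoid X))

/-- The point `r_x` of the Alexandroff Noodles, for `x ∈ X` and `r ∈ [0,1]`
(so `0_x` is `noodlePt x 0`, the common image of `x` and `(x, 0)`). -/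
def noodlePt {X : Type*} (x : X) (r : unitInterval) : Noodles X :=
  Quotient.mk (noodleSetoid X) (Sum.inr (x, r))

/-- The map `x ↦ 0_x` is a closed embedding of `X` into its Alexandroff Noodles: it is a
homeomorphism of `X` onto the subspace `{0_x : x ∈ X}`, which is closed in `XI`. -/
theorem noodles_closedEmbedding (X : Type*) [TopologicalSpace X] :
    Topology.IsClosedEmbedding (fun x : X => noodlePt x 0) := by
  have key : ∀ x : X, noodlePt x 0 = Quotient.mk (noodleSetoid X) (Sum.inl x) :=
    fun x => Quotient.sound (s := noodleSetoid X) rfl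
  have inj : ∀ (x : X) (p : X × unitInterval),
      noodlePt x 0 = Quotient.mk (noodleSetoid X) (Sum.inr p) → (x, 0) = p :=
    fun x p h => Quotient.exact (s := noodleSetoid X) h
  refine IsClosedEmbedding.of_continuous_injective_isClosedMap ?_ ?_ ?_
  · have h : (fun x : X => noodlePt x 0)
        = fun x => Quotient.mk (noodleSetoid X) (Sum.inl x) := funext key
    rw [h]
    letI : TopologicalSpace (X ⊕ (X × unitInterval)) := noodleSumTop X
    have h1 : Continuous (Quotient.mk (noodleSetoid X) : _ → Noodles X) :=
      continuous_coinduced_rng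
    have h2 : Continuous (Sum.inl : X → X ⊕ (X × unitInterval)) :=
      @continuous_inl X (X × unitInterval) _
        (@instTopologicalSpaceProd X unitInterval ⊥ inferInstance)
    exact h1.comp h2
  · intro x y h
    exact congrArg Prod.fst (inj x (y, 0) h)
  · intro C hC
    refine (@isClosed_coinduced _ _ (noodleSumTop X) _ _).2 ?_
    refine (@isClosed_sum_iff X (X × unitInterval) _
        (@instTopologicalSpaceProd X unitInterval ⊥ inferInstance) _).2 ⟨?_, ?_⟩
    · convert hC using 1
      ext x
      constructor
      · rintro ⟨y, hy, h⟩
        have h' : noodlePt y 0 = noodlePt x 0 := h.trans (key x).symm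
        have := congrArg Prod.fst (inj y (x, 0) h')
        simp only at this
        exact this ▸ hy
      · intro hx
        exact ⟨x, hx, key x⟩
    · letI tD : TopologicalSpace X := ⊥
      haveI : DiscreteTopology X := ⟨rfl⟩
      have : IsClosed (C ×ˢ ({0} : Set unitInterval)) :=
        (isClosed_discrete C).prod isClosed_singleton
      convert this using 1
      ext p
      constructor
      · rintro ⟨y, hy, h⟩
        have := inj y p h
        subst this
        exact ⟨hy, rfl⟩
      · rintro ⟨h1, h2⟩
        obtain ⟨a, b⟩ := p
        simp only [Set.mem_singleton_iff] at h1 h2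
        subst h2
        exact ⟨a, h1, rfl⟩
end

section
/- Let X be a topological space and XI its Alexandroff Noodles. For every self-homeomorphism f of X, the map g : XI → XI defined by g(r_x) = r_{f(x)} for all x ∈ X and r ∈ [0,1] is a self-homeomorphism of XI satisfying g(0_x) = 0_{f(x)} for all x ∈ X; in particular, every self-homeomorphism of X extends to a self-homeomorphism of XI. -/
open Topology unitInterval

def noodleSumMap {X : Type*} (f : X → X) : X ⊕ (X × unitInterval) → X ⊕ (X × unitInterval) :=
  Sum.map f (Prod.map f id)

theorem noodleProj_map {X : Type*} (f : X → X) (a : X ⊕ (X × unitInterval)) :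
    noodleProj X (noodleSumMap f a) = Prod.map f id (noodleProj X a) := by
  rcases a with x | p <;> rfl

def noodleMap {X : Type*} (f : X → X) : Noodles X → Noodles X :=
  Quotient.map (noodleSumMap f) (by
    intro a b h
    change noodleProj X _ = noodleProj X _
    have h' : noodleProj X a = noodleProj X b := h
    rw [noodleProj_map, noodleProj_map, h'])

theorem continuous_noodleSumMap {X : Type*} [t : TopologicalSpace X] {f : X → X}
    (hf : Continuous f) : @Continuous _ _ (noodleSumTop X) (noodleSumTop X) (noodleSumMap f) := by
  refine @Continuous.sumMap X X (X × unitInterval) (X × unitInterval) t t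
    (@instTopologicalSpaceProd X unitInterval ⊥ inferInstance)
    (@instTopologicalSpaceProd X unitInterval ⊥ inferInstance) _ _ hf ?_
  exact @Continuous.prodMap X unitInterval unitInterval X ⊥ inferInstance ⊥ inferInstance _ _
    continuous_bot continuous_id

theorem continuous_noodleMap {X : Type*} [TopologicalSpace X] {f : X → X}
    (hf : Continuous f) : Continuous (noodleMap f) := by
  refine continuous_coinduced_dom.2 ?_
  letI := noodleSumTop X
  have h : Continuous (Quotient.mk (noodleSetoid X) : _ → Noodles X) := continuous_coinduced_rng
  exact h.comp (continuous_noodleSumMap hf)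

theorem noodleMap_leftInverse {X : Type*} {f g : X → X} (h : Function.LeftInverse g f) :
    Function.LeftInverse (noodleMap g) (noodleMap f) := by
  intro a
  induction a using Quotient.inductionOn with
  | h a =>
    change Quotient.mk (noodleSetoid X) (noodleSumMap g (noodleSumMap f a)) = _
    congr 1
    rcases a with x | ⟨x, r⟩ <;> simp [noodleSumMap, h _]

/-- Every self-homeomorphism `f` of `X` extends to a self-homeomorphism `g` of the
Alexandroff Noodles `XI`, given by `g(r_x) = r_{f(x)}`; in particular `g(0_x) = 0_{f(x)}`. -/
theorem noodles_homeomorph_extension {X : Type*} [TopologicalSpace X] (f : X ≃ₜ X) :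
    ∃ g : Noodles X ≃ₜ Noodles X,
      (∀ (x : X) (r : unitInterval), g (noodlePt x r) = noodlePt (f x) r) ∧
      (∀ x : X, g (noodlePt x 0) = noodlePt (f x) 0) := by
  exact ⟨{ toFun := noodleMap f
           invFun := noodleMap f.symm
           left_inv := noodleMap_leftInverse f.symm_apply_apply
           right_inv := noodleMap_leftInverse f.apply_symm_apply
           continuous_toFun := continuous_noodleMap f.continuous
           continuous_invFun := continuous_noodleMap f.symm.continuous },
    fun _ _ => rfl, fun _ => rfl⟩
end

section
/- Let X be a topological space and XI its Alexandroff Noodles. Then the inversion map f ↦ f⁻¹ is continuous on Hom_p(XI). -/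
open Topology unitInterval

namespace NoodleAux

variable {X : Type*}

/-- coordinates -/
def co (p : Noodles X) : X × unitInterval :=
  Quotient.lift (s := noodleSetoid X) (noodleProj X) (fun _ _ h => h) p

theorem co_pt (x : X) (r : unitInterval) : co (noodlePt x r) = (x, r) := rfl

theorem pt_co (p : Noodles X) : noodlePt (co p).1 (co p).2 = p := by
  induction p using Quotient.inductionOn with
  | h a =>
    apply Quotient.sound
    show noodleProj X _ = noodleProj X _
    rfl

theorem mk_inl (x : X) : (Quotient.mk (noodleSetoid X) (Sum.inl x) : Noodles X) = noodlePt x 0 := by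
  apply Quotient.sound
  show noodleProj X _ = noodleProj X _
  rfl

theorem isOpen_iff [TopologicalSpace X] (W : Set (Noodles X)) :
    IsOpen W ↔ IsOpen {x | noodlePt x 0 ∈ W} ∧ ∀ x, IsOpen {r | noodlePt x r ∈ W} := by
  have h1 : IsOpen W ↔ IsOpen[noodleSumTop X] (Quotient.mk (noodleSetoid X) ⁻¹' W) := Iff.rfl
  rw [h1]
  unfold noodleSumTop
  letI tp : TopologicalSpace (X × unitInterval) := @instTopologicalSpaceProd X unitInterval ⊥ inferInstance
  rw [isOpen_sum_iff]
  have e1 : (Sum.inl ⁻¹' (Quotient.mk (noodleSetoid X) ⁻¹' W) : Set X) = {x | noodlePt x 0 ∈ W} := by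
    ext x
    simp only [Set.mem_preimage, Set.mem_setOf_eq, ← mk_inl]
    rfl
  rw [e1]
  refine and_congr Iff.rfl ?_
  constructor
  · intro h x
    have : Continuous (fun r : unitInterval => (x, r)) :=
      @Continuous.prodMk _ _ _ ⊥ _ _ _ _ (@continuous_const _ _ _ ⊥ x) continuous_id
    exact h.preimage this
  · intro h
    letI : TopologicalSpace X := ⊥
    haveI : DiscreteTopology X := ⟨rfl⟩
    show @IsOpen _ (instTopologicalSpaceProd) _
    rw [isOpen_prod_iff]
    intro a b hab
    exact ⟨{a}, {r | noodlePt a r ∈ W}, isOpen_discrete _, h a, rfl, hab, by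
      rintro ⟨c, d⟩ ⟨hc, hd⟩
      obtain rfl : c = a := hc
      exact hd⟩

def pr (p : Noodles X) : X := (co p).1
def ht (p : Noodles X) : unitInterval := (co p).2
open Classical in
noncomputable def rho (x : X) (p : Noodles X) : unitInterval := if pr p = x then ht p else 0

@[simp] theorem pr_pt (x : X) (r : unitInterval) : pr (noodlePt x r) = x := rfl
@[simp] theorem ht_pt (x : X) (r : unitInterval) : ht (noodlePt x r) = r := rfl
@[simp] theorem rho_pt (x : X) (r : unitInterval) : rho x (noodlePt x r) = r := by simp [rho]
theorem rho_ne {x y : X} (h : y ≠ x) (r : unitInterval) : rho x (noodlePt y r) = 0 := by simp [rho, h]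
theorem eta (p : Noodles X) : noodlePt (pr p) (ht p) = p := pt_co p

theorem eq_of_rho_pos {x : X} {p : Noodles X} (h : 0 < rho x p) : p = noodlePt x (rho x p) := by
  by_cases hp : pr p = x
  · subst hp
    simp [rho, eta]
  · simp [rho, hp] at h

theorem rho_of_pr {x : X} {p : Noodles X} (h : pr p = x) : rho x p = ht p := by simp [rho, h]

theorem eq_of_pr {x : X} {p : Noodles X} (h : pr p = x) : p = noodlePt x (rho x p) := by
  rw [rho_of_pr h, ← h, eta]

theorem pt_inj {x y : X} {r s : unitInterval} (h : noodlePt x r = noodlePt y s) : x = y ∧ r = s :=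
  ⟨congrArg pr h, congrArg ht h⟩

variable [TopologicalSpace X]

theorem cont_pt (x : X) : Continuous (fun r => noodlePt x r) :=
  ⟨fun _ hW => ((isOpen_iff _).1 hW).2 x⟩

theorem cont_zero : Continuous (fun x : X => noodlePt x 0) :=
  ⟨fun _ hW => ((isOpen_iff _).1 hW).1⟩

theorem cont_pr : Continuous (pr : Noodles X → X) := by
  refine ⟨fun U hU => (isOpen_iff _).2 ⟨by simpa using hU, fun x => ?_⟩⟩
  simp

theorem cont_ht : Continuous (ht : Noodles X → unitInterval) := by
  refine ⟨fun U hU => (isOpen_iff _).2 ⟨by simp, fun x => ?_⟩⟩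
  simpa using hU

theorem cont_rho (x : X) : Continuous (rho x : Noodles X → unitInterval) := by
  refine ⟨fun U hU => (isOpen_iff _).2 ⟨?_, fun y => ?_⟩⟩
  · have : ∀ y : X, rho x (noodlePt y 0) = 0 := fun y => by simp only [rho, ht_pt, ite_self]
    simp [this]
  · by_cases h : y = x
    · subst h
      simpa using hU
    · simp [rho_ne h]

theorem mono_aux {g : unitInterval → unitInterval} (hg : Continuous g) {r : unitInterval}
    (h0 : 0 < r) (h1 : r < 1) {N : Set unitInterval} (hN : N ∈ 𝓝 r) (hi : Set.InjOn g N) :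
    ∃ a b, Set.uIcc a b ⊆ N ∧ g a < g r ∧ g r < g b := by
  obtain ⟨l, hl, hlN⟩ := exists_Ioc_subset_of_mem_nhds hN ⟨0, h0⟩
  obtain ⟨u, hu, huN⟩ := exists_Ico_subset_of_mem_nhds hN ⟨1, h1⟩
  obtain ⟨l', hl1, hl2⟩ := exists_between hl
  obtain ⟨u', hu1, hu2⟩ := exists_between hu
  have hsub : Set.Icc l' u' ⊆ N := by
    intro t ht
    rcases le_total t r with h | h
    · exact hlN ⟨hl1.trans_le ht.1, h⟩
    · exact huN ⟨h, ht.2.trans_lt hu2⟩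
  have hlu : l' ≤ u' := (hl2.trans hu1).le
  have ml : l' ∈ Set.Icc l' u' := ⟨le_rfl, hlu⟩
  have mu : u' ∈ Set.Icc l' u' := ⟨hlu, le_rfl⟩
  have mr : r ∈ Set.Icc l' u' := ⟨hl2.le, hu1.le⟩
  rcases hg.continuousOn.strictMonoOn_of_injOn_Icc' hlu (hi.mono hsub) with h | h
  · exact ⟨l', u', by rwa [Set.uIcc_of_le hlu], h ml mr hl2, h mr mu hu1⟩
  · exact ⟨u', l', by rwa [Set.uIcc_of_ge hlu], h mr mu hu1, h ml mr hl2⟩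

/-- interior points of noodles -/
def In (p : Noodles X) : Prop := 0 < ht p ∧ ht p < 1

theorem between (f : Noodles X ≃ₜ Noodles X) (x : X) {k : unitInterval} (hk : 0 < k)
    {y : X} (hy : f (noodlePt x k) = noodlePt y 0) :
    ∃ a, a ≠ k ∧ ∀ j, rho y (f (noodlePt x j)) = 0 → k ∈ Set.uIcc a j := by
  set g : unitInterval → unitInterval := fun t => rho y (f (noodlePt x t)) with hg
  have gc : Continuous g := (cont_rho y).comp (f.continuous.comp (cont_pt x))
  set τ : unitInterval → unitInterval := fun t => rho x (f.symm (noodlePt y t)) with hτ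
  have τc : Continuous τ := (cont_rho x).comp (f.symm.continuous.comp (cont_pt y))
  have τ0 : τ 0 = k := by simp [hτ, ← hy]
  have hpos : ∀ t, 0 < τ t → f (noodlePt x (τ t)) = noodlePt y t := by
    intro t ht
    rw [← eq_of_rho_pos ht]; simp
  have hN : {t | 0 < τ t} ∈ 𝓝 (0 : unitInterval) :=
    (isOpen_lt continuous_const τc).mem_nhds (by simpa [τ0] using hk)
  obtain ⟨u, hu, huN⟩ := exists_Ico_subset_of_mem_nhds hN ⟨1, zero_lt_one⟩
  obtain ⟨t0, ht0, ht0u⟩ := exists_between hu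
  have key : ∀ t, t ≤ t0 → f (noodlePt x (τ t)) = noodlePt y t := fun t ht =>
    hpos t (huN ⟨unitInterval.nonneg', ht.trans_lt ht0u⟩)
  have ga : g (τ t0) = t0 := by simp [hg, key t0 le_rfl]
  refine ⟨τ t0, ?_, ?_⟩
  · intro h
    have : g k = 0 := by simp [hg, hy]
    rw [← h, ga] at this
    exact ht0.ne' this
  · intro j hj
    have hmem : ∀ t ∈ Set.Ioo 0 t0, τ t ∈ Set.uIcc (τ t0) j := by
      intro t ht
      have hiv := intermediate_value_uIcc (a := τ t0) (b := j) (f := g) gc.continuousOn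
      have : t ∈ Set.uIcc (g (τ t0)) (g j) := by
        rw [ga, show g j = 0 from hj, Set.uIcc_of_ge ht0.le]
        exact ⟨ht.1.le, ht.2.le⟩
      obtain ⟨c, hc, hct⟩ := hiv this
      have h2 : f (noodlePt x c) = noodlePt y t := by
        have : 0 < rho y (f (noodlePt x c)) := by
          show 0 < g c
          rw [hct]; exact ht.1
        rw [eq_of_rho_pos this]
        show noodlePt y (g c) = _
        rw [hct]
      rw [← key t ht.2.le] at h2
      rw [← (pt_inj (f.injective h2)).2]
      exact hc
    have hcl : (0 : unitInterval) ∈ closure (Set.Ioo 0 t0) := by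
      rw [closure_Ioo ht0.ne]
      exact ⟨le_rfl, ht0.le⟩
    rw [← τ0]
    have := map_mem_closure τc hcl hmem
    exact (isClosed_Icc (a := τ t0 ⊓ j) (b := τ t0 ⊔ j)).closure_eq.subset this

theorem three (f : Noodles X ≃ₜ Noodles X) (x : X) {k1 k2 k3 : unitInterval}
    (h12 : k1 < k2) (h23 : k2 < k3) (H : ht (f (noodlePt x k1)) = 0)
    (H2 : ht (f (noodlePt x k2)) = 0) (H3 : ht (f (noodlePt x k3)) = 0) : False := by
  obtain ⟨a, ha, hb⟩ := between f x (k := k2) (unitInterval.nonneg'.trans_lt h12)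
    (y := pr (f (noodlePt x k2))) (by rw [← H2, eta])
  have z : ∀ j, ht (f (noodlePt x j)) = 0 → rho (pr (f (noodlePt x k2))) (f (noodlePt x j)) = 0 := by
    intro j hj
    simp [rho, hj]
  have b1 := hb k1 (z _ H)
  have b3 := hb k3 (z _ H3)
  rw [Set.mem_uIcc] at b1 b3
  rcases b1 with b1 | b1
  · exact absurd b1.2 (not_le.2 h12)
  · rcases b3 with b3 | b3
    · exact ha (le_antisymm b3.1 b1.2)
    · exact absurd b3.1 (not_le.2 h23)

theorem in_map (f : Noodles X ≃ₜ Noodles X) {p : Noodles X} (hp : In p) : In (f p) := by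
  obtain ⟨x, r, rfl⟩ : ∃ x r, p = noodlePt x r := ⟨_, _, (eta p).symm⟩
  obtain ⟨h0, h1⟩ : 0 < r ∧ r < 1 := hp
  set y := pr (f (noodlePt x r)) with hy
  set g : unitInterval → unitInterval := fun t => rho y (f (noodlePt x t)) with hg
  have fc : Continuous (fun t => f (noodlePt x t)) := f.continuous.comp (cont_pt x)
  have gc : Continuous g := (cont_rho y).comp fc
  have gr : g r = ht (f (noodlePt x r)) := rho_of_pr rfl
  have inj : ∀ s t, f (noodlePt x s) = f (noodlePt x t) → s = t := fun s t h =>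
    (pt_inj (f.injective h)).2
  have hpos : 0 < ht (f (noodlePt x r)) := by
    rw [unitInterval.pos_iff_ne_zero]
    intro hz
    have hfr : f (noodlePt x r) = noodlePt y 0 := by rw [← hz, hy, eta]
    by_cases ho : IsOpen ({y} : Set X)
    · obtain ⟨a, b, -, ha, -⟩ := mono_aux gc h0 h1
        (N := (fun t => f (noodlePt x t)) ⁻¹' (pr ⁻¹' {y}))
        (((ho.preimage cont_pr).preimage fc).mem_nhds rfl)
        (fun s hs t ht hst => inj s t (by
          rw [eq_of_pr (p := f (noodlePt x s)) hs, eq_of_pr (p := f (noodlePt x t)) ht]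
          exact congrArg _ hst))
      rw [gr, hz] at ha
      exact absurd ha (not_lt.2 unitInterval.nonneg')
    · have acc : ∀ N : Set unitInterval, IsOpen N → r ∈ N → ∃ k ∈ N, k ≠ r ∧
          ht (f (noodlePt x k)) = 0 := by
        intro N hN hrN
        set sg : X → unitInterval := fun v => rho x (f.symm (noodlePt v 0)) with hsg
        have sgc : Continuous sg := (cont_rho x).comp (f.symm.continuous.comp cont_zero)
        have sgy : sg y = r := by simp [hsg, ← hfr]
        have hU : IsOpen (sg ⁻¹' (N ∩ Set.Ioi 0)) := (hN.inter isOpen_Ioi).preimage sgc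
        have hyU : y ∈ sg ⁻¹' (N ∩ Set.Ioi 0) := by
          show sg y ∈ N ∩ Set.Ioi 0
          rw [sgy]; exact ⟨hrN, h0⟩
        obtain ⟨v, hv, hvy⟩ : ∃ v ∈ sg ⁻¹' (N ∩ Set.Ioi 0), v ≠ y := by
          by_contra! hcon
          apply ho
          convert hU using 1
          ext v
          exact ⟨fun h => by rw [Set.mem_singleton_iff.1 h]; exact hyU, fun h => hcon v h⟩
        have hfk : f (noodlePt x (sg v)) = noodlePt v 0 := by
          rw [← eq_of_rho_pos (show 0 < rho x (f.symm (noodlePt v 0)) from hv.2)]; simp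
        refine ⟨sg v, hv.1, ?_, by rw [hfk]; rfl⟩
        intro h
        rw [h, hfr] at hfk
        exact hvy (pt_inj hfk).1.symm
      obtain ⟨k, -, hkr, hk⟩ := acc Set.univ isOpen_univ trivial
      rcases lt_or_gt_of_ne hkr with h | h
      · obtain ⟨m, hm, hmr, hm0⟩ := acc (Set.Ioi k) isOpen_Ioi h
        rcases lt_or_gt_of_ne hmr with h' | h'
        · exact three f x hm h' hk hm0 hz
        · exact three f x h h' hk hz hm0
      · obtain ⟨m, hm, hmr, hm0⟩ := acc (Set.Iio k) isOpen_Iio h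
        rcases lt_or_gt_of_ne hmr with h' | h'
        · exact three f x h' h hm0 hz hk
        · exact three f x h' hm hz hm0 hk
  refine ⟨hpos, ?_⟩
  by_contra hlt
  obtain ⟨a, b, -, -, hb⟩ := mono_aux gc h0 h1 (N := {t | 0 < g t})
    ((isOpen_lt continuous_const gc).mem_nhds (by simpa [gr] using hpos))
    (fun s hs t ht hst => inj s t (by
      rw [eq_of_rho_pos (p := f (noodlePt x s)) hs, eq_of_rho_pos (p := f (noodlePt x t)) ht]
      exact congrArg _ hst))
  rw [gr] at hb
  exact hlt (hb.trans_le unitInterval.le_one')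

theorem in_iff (f : Noodles X ≃ₜ Noodles X) (p : Noodles X) : In (f p) ↔ In p :=
  ⟨fun h => by simpa using in_map f.symm h, in_map f⟩

theorem not_in {p : Noodles X} (h : ¬ In p) : ht p = 0 ∨ ht p = 1 := by
  by_contra! hc
  exact h ⟨unitInterval.pos_iff_ne_zero.2 hc.1, unitInterval.lt_one_iff_ne_one.2 hc.2⟩

/-- isolated in the complement of the interior points -/
def Iso (p : Noodles X) : Prop := ∃ W : Set (Noodles X), IsOpen W ∧ p ∈ W ∧ ∀ q ∈ W, ¬ In q → q = p

theorem iso_map (f : Noodles X ≃ₜ Noodles X) {p : Noodles X} (hp : Iso p) : Iso (f p) := by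
  obtain ⟨W, hW, hpW, h⟩ := hp
  refine ⟨f.symm ⁻¹' W, hW.preimage f.symm.continuous, by simpa using hpW, fun q hq hqi => ?_⟩
  rw [← h _ hq (by rwa [in_iff])]; simp

theorem iso_one (x : X) : Iso (noodlePt x 1) := by
  refine ⟨{p | 0 < rho x p}, isOpen_lt continuous_const (cont_rho x), by simp, fun q hq hqi => ?_⟩
  have e := eq_of_rho_pos hq
  rcases not_in hqi with h | h
  · rw [e] at h
    exact absurd h (ne_of_gt hq)
  · rw [e] at h ⊢
    rw [ht_pt] at h
    rw [h]

theorem same_noodle (f : Noodles X ≃ₜ Noodles X) {x w : X} {s t : unitInterval}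
    (hs : s ∈ Set.Ioo 0 1) (ht' : t ∈ Set.Ioo 0 1) (h : pr (f (noodlePt x s)) = w) :
    pr (f (noodlePt x t)) = w := by
  have fc : Continuous (fun t => f (noodlePt x t)) := f.continuous.comp (cont_pt x)
  have oA : IsOpen {p : Noodles X | 0 < ht p ∧ pr p = w} := by
    convert isOpen_lt (continuous_const (y := (0 : unitInterval))) (cont_rho w) using 1
    ext p
    by_cases hp : pr p = w <;> simp [rho, hp]
  have oB : IsOpen {p : Noodles X | 0 < ht p ∧ pr p ≠ w} := by
    rw [isOpen_iff]
    refine ⟨by simp, fun v => ?_⟩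
    by_cases hv : v = w
    · simp [hv]
    · simpa [hv] using (isOpen_lt continuous_const continuous_id : IsOpen {r : unitInterval | 0 < r})
  have conn : IsPreconnected (Set.Ioo (0 : unitInterval) 1) := isPreconnected_Ioo
  have := conn.subset_left_of_subset_union (oA.preimage fc) (oB.preimage fc)
    (by
      rw [Set.disjoint_left]
      rintro a ha hb
      exact hb.2 ha.2)
    (by
      intro a ha
      have hi := (in_map f (p := noodlePt x a) ha).1
      by_cases hw : pr (f (noodlePt x a)) = w
      · exact Or.inl ⟨hi, hw⟩
      · exact Or.inr ⟨hi, hw⟩)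
    ⟨s, hs, (in_map f (p := noodlePt x s) hs).1, h⟩
  exact (this ht').2

theorem near (f : Noodles X ≃ₜ Noodles X) (x : X) (e : unitInterval) {U : Set (Noodles X)}
    (hU : IsOpen U) (he : f (noodlePt x e) ∈ U) : ∃ t ∈ Set.Ioo 0 1, f (noodlePt x t) ∈ U := by
  have fc : Continuous (fun t => f (noodlePt x t)) := f.continuous.comp (cont_pt x)
  have : e ∈ closure (Set.Ioo (0 : unitInterval) 1) := by
    rw [closure_Ioo zero_ne_one]
    exact ⟨unitInterval.nonneg', unitInterval.le_one'⟩
  obtain ⟨t, h1, h2⟩ := mem_closure_iff.1 this _ (hU.preimage fc) he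
  exact ⟨t, h2, h1⟩

theorem spec_end (f : Noodles X ≃ₜ Noodles X) {x w : X} {s : unitInterval}
    (hs : s ∈ Set.Ioo 0 1) (h : pr (f (noodlePt x s)) = w) (e : unitInterval) :
    w ⤳ pr (f (noodlePt x e)) := by
  rw [specializes_iff_forall_open]
  intro U hU he
  obtain ⟨t, ht', hm⟩ := near f x e (hU.preimage cont_pr) he
  rw [← same_noodle f hs ht' h]
  exact hm

theorem pos_end (f : Noodles X ≃ₜ Noodles X) {x w : X} {s : unitInterval}
    (hs : s ∈ Set.Ioo 0 1) (h : pr (f (noodlePt x s)) = w) (e : unitInterval)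
    (hp : ht (f (noodlePt x e)) = 1) : f (noodlePt x e) = noodlePt w 1 := by
  set v := pr (f (noodlePt x e)) with hv
  obtain ⟨t, ht', hm⟩ := near f x e (U := {p | 0 < rho v p})
    (isOpen_lt continuous_const (cont_rho v)) (by
      show 0 < rho v _
      rw [rho_of_pr rfl, hp]; exact zero_lt_one)
  have h1 := same_noodle f hs ht' h
  rw [eq_of_rho_pos hm, pr_pt] at h1
  rw [← h1, ← hp, hv, eta]

theorem insep (f : Noodles X ≃ₜ Noodles X) {x w : X} {s : unitInterval}
    (hs : s ∈ Set.Ioo 0 1) (h : pr (f (noodlePt x s)) = w) (hx : ¬ Iso (noodlePt x 0)) :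
    Inseparable (f (noodlePt x 0)) (noodlePt w 0) := by
  have nin0 : ∀ y : X, ¬ In (noodlePt y 0) := fun y hy => lt_irrefl _ hy.1
  have nin1 : ∀ y : X, ¬ In (noodlePt y 1) := fun y hy => lt_irrefl _ hy.2
  have hfx : ht (f (noodlePt x 0)) = 0 := by
    rcases not_in (p := f (noodlePt x 0)) (by rw [in_iff]; exact nin0 x) with h | h
    · exact h
    · exfalso
      have := iso_one (pr (f (noodlePt x 0)))
      rw [← h, eta] at this
      exact hx (by simpa using iso_map f.symm this)
  set s' := ht (f (noodlePt x s)) with hs'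
  have hs'm : s' ∈ Set.Ioo 0 1 := in_map f (p := noodlePt x s) hs
  have hback : pr (f.symm (noodlePt w s')) = x := by
    rw [← h, hs', eta]; simp
  have S1 : noodlePt w 0 ⤳ f (noodlePt x 0) := by
    have := (spec_end f hs h 0).map cont_zero
    have e := eta (f (noodlePt x 0))
    rw [hfx] at e
    rwa [e] at this
  have S2 : f (noodlePt x 0) ⤳ noodlePt w 0 := by
    have hq := spec_end f.symm hs'm hback 0
    rcases not_in (p := f.symm (noodlePt w 0)) (by rw [in_iff]; exact nin0 w) with h0 | h0
    · have := hq.map cont_zero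
      have e := eta (f.symm (noodlePt w 0))
      rw [h0] at e
      rw [e] at this
      simpa using this.map f.continuous
    · exfalso
      have q1 := pos_end f.symm hs'm hback 0 h0
      have hq' := spec_end f.symm hs'm hback 1
      have iq : Iso (f.symm (noodlePt w 1)) := iso_map f.symm (iso_one w)
      rcases not_in (p := f.symm (noodlePt w 1)) (by rw [in_iff]; exact nin1 w) with h2 | h2
      · have := hq'.map cont_zero
        have e := eta (f.symm (noodlePt w 1))
        rw [h2] at e
        rw [e] at this
        obtain ⟨W, hW, hm, hall⟩ := iq
        have := hall _ (this.mem_open hW hm) (nin0 x)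
        exact hx (this ▸ ⟨W, hW, hm, hall⟩)
      · have q2 := pos_end f.symm hs'm hback 1 h2
        rw [← q2] at q1
        exact zero_ne_one (pt_inj (f.symm.injective q1)).2
  exact S2.antisymm S1

end NoodleAux

open NoodleAux in
/-- For any topological space `X`, inversion `f ↦ f⁻¹` is continuous on `Hom_p(XI)`,
where `XI` is the Alexandroff Noodles of `X`. -/
theorem noodles_inversion_continuous (X : Type*) [TopologicalSpace X] :
    Continuous[homPTop (Noodles X), homPTop (Noodles X)]
      (fun f : Noodles X ≃ₜ Noodles X => f.symm) := by
  letI := homPTop (Noodles X)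
  have ev : ∀ p : Noodles X, Continuous (fun f : Noodles X ≃ₜ Noodles X => f p) := fun p =>
    (continuous_apply p).comp continuous_induced_dom
  refine continuous_induced_rng.2 (continuous_pi fun y => ?_)
  show Continuous (fun f : Noodles X ≃ₜ Noodles X => f.symm y)
  rw [continuous_iff_continuousAt]
  intro f₀ V hV
  obtain ⟨V', hV'V, hV'o, hzV⟩ := mem_nhds_iff.1 hV
  have hy : f₀ (f₀.symm y) = y := by simp
  replace hzV : f₀.symm y ∈ V' := hzV
  generalize hz : f₀.symm y = z at hzV hy
  suffices H : ∀ᶠ f in 𝓝 f₀, f.symm y ∈ V' from H.mono fun f hf => hV'V hf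
  obtain ⟨x, r, rfl⟩ : ∃ x r, z = noodlePt x r := ⟨_, _, (eta z).symm⟩
  by_cases hin : In (noodlePt x r)
  · -- interior case
    have hyin : In y := hy ▸ in_map f₀ hin
    obtain ⟨h0, h1⟩ : 0 < r ∧ r < 1 := hin
    set w := pr y with hw
    set g : unitInterval → unitInterval := fun t => rho w (f₀ (noodlePt x t)) with hg
    have gc : Continuous g := (cont_rho w).comp (f₀.continuous.comp (cont_pt x))
    have gr : g r = ht y := by
      show rho w (f₀ (noodlePt x r)) = _
      rw [hy]; exact rho_of_pr rfl
    obtain ⟨a, b, hab, ha, hb⟩ := mono_aux gc h0 h1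
      (N := {t | 0 < g t} ∩ (fun t => noodlePt x t) ⁻¹' V')
      (((isOpen_lt continuous_const gc).inter (hV'o.preimage (cont_pt x))).mem_nhds
        ⟨by simpa [gr] using hyin.1, hzV⟩)
      (fun s hs t ht hst => (pt_inj (f₀.injective (by
        rw [eq_of_rho_pos (p := f₀ (noodlePt x s)) hs.1,
          eq_of_rho_pos (p := f₀ (noodlePt x t)) ht.1]
        exact congrArg _ hst))).2)
    rw [gr] at ha hb
    have ea : ∀ᶠ f in 𝓝 f₀, rho w (f (noodlePt x a)) < ht y :=
      (isOpen_lt ((cont_rho w).comp (ev _)) continuous_const).mem_nhds ha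
    have eb : ∀ᶠ f in 𝓝 f₀, ht y < rho w (f (noodlePt x b)) :=
      (isOpen_lt continuous_const ((cont_rho w).comp (ev _))).mem_nhds hb
    filter_upwards [ea, eb] with f hfa hfb
    have hiv := intermediate_value_uIcc (a := a) (b := b) (f := fun t => rho w (f (noodlePt x t)))
      ((cont_rho w).comp (f.continuous.comp (cont_pt x))).continuousOn
    obtain ⟨c, hc, hcy⟩ := hiv (Set.mem_uIcc.2 (Or.inl ⟨hfa.le, hfb.le⟩))
    have hcy' : rho w (f (noodlePt x c)) = ht y := hcy
    have : f (noodlePt x c) = y := by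
      rw [eq_of_rho_pos (x := w) (p := f (noodlePt x c)) (by rw [hcy']; exact hyin.1), hcy', hw, eta]
    rw [← this]
    simpa using (hab hc).2
  · by_cases hiso : Iso (noodlePt x r)
    · obtain ⟨W, hW, hyW, hall⟩ := hy ▸ iso_map f₀ hiso
      have e : ∀ᶠ f in 𝓝 f₀, f (noodlePt x r) ∈ W :=
        (hW.preimage (ev (noodlePt x r))).mem_nhds (by simpa [hy] using hyW)
      filter_upwards [e] with f hf
      rw [← hall _ hf (by rwa [in_iff])]
      simpa using hzV
    · have hr : r = 0 := by
        rcases not_in hin with h | h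
        · exact h
        · obtain rfl : r = 1 := h
          exact absurd (iso_one x) hiso
      subst hr
      obtain ⟨s, hs⟩ : (Set.Ioo (0 : unitInterval) 1).Nonempty := Set.nonempty_Ioo.2 zero_lt_one
      set w := pr (f₀ (noodlePt x s)) with hw
      have e : ∀ᶠ f in 𝓝 f₀, 0 < rho w (f (noodlePt x s)) :=
        (isOpen_lt continuous_const ((cont_rho w).comp (ev _))).mem_nhds (by
          show 0 < rho w (f₀ (noodlePt x s))
          rw [rho_of_pr rfl]
          exact (in_map f₀ (p := noodlePt x s) hs).1)
      filter_upwards [e] with f hf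
      have i1 := insep f₀ hs rfl hiso
      have i2 := insep f (w := w) hs (by rw [eq_of_rho_pos hf]; rfl) hiso
      rw [hy] at i1
      have i3 := (i1.trans i2.symm).map f.symm.continuous
      rw [f.symm_apply_apply] at i3
      exact (i3.mem_open_iff hV'o).2 hzV
end

section
/- Let X be a topological space and XI its Alexandroff Noodles. Then Hom_p(XI) is a topological group. -/
open Topology unitInterval

section NoodleHelpers

attribute [local instance] homPTop

open Set Filter

variable {X : Type*}

theorem noodlePt_inj {x y : X} {r s : unitInterval} :
    noodlePt x r = noodlePt y s ↔ x = y ∧ r = s := by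
  constructor
  · intro h
    have h1 : noodleProj X (Sum.inr (x, r)) = noodleProj X (Sum.inr (y, s)) := Quotient.exact h
    simpa [noodleProj] using h1
  · rintro ⟨rfl, rfl⟩; rfl

theorem noodle_inl (x : X) :
    (Quotient.mk (noodleSetoid X) (Sum.inl x) : Noodles X) = noodlePt x 0 := by
  apply Quotient.sound
  show noodleProj X _ = noodleProj X _
  rfl

theorem noodle_surj (p : Noodles X) : ∃ x r, p = noodlePt x r := by
  obtain ⟨a, rfl⟩ := Quotient.exists_rep p
  rcases a with x | ⟨x, r⟩
  · exact ⟨x, 0, noodle_inl x⟩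
  · exact ⟨x, r, rfl⟩

theorem noodle_isOpen [TopologicalSpace X] {U : Set (Noodles X)} :
    IsOpen U ↔ IsOpen {x | noodlePt x 0 ∈ U} ∧ ∀ x, IsOpen {r | noodlePt x r ∈ U} := by
  have h1 : IsOpen U ↔ @IsOpen _ (noodleSumTop X) (Quotient.mk (noodleSetoid X) ⁻¹' U) :=
    Iff.rfl
  have h2 : @IsOpen _ (noodleSumTop X) (Quotient.mk (noodleSetoid X) ⁻¹' U) ↔
      IsOpen {x | noodlePt x 0 ∈ U} ∧
      @IsOpen _ (@instTopologicalSpaceProd X unitInterval ⊥ inferInstance)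
        {q : X × unitInterval | noodlePt q.1 q.2 ∈ U} := by
    unfold noodleSumTop
    letI : TopologicalSpace (X × unitInterval) :=
      (@instTopologicalSpaceProd X unitInterval ⊥ inferInstance)
    rw [isOpen_sum_iff]
    have e : Sum.inl ⁻¹' (Quotient.mk (noodleSetoid X) ⁻¹' U) = {x | noodlePt x 0 ∈ U} := by
      ext x
      simp only [mem_preimage, mem_setOf_eq]
      rw [← noodle_inl]; rfl
    rw [e]; rfl
  rw [h1, h2]
  refine and_congr_right fun _ => ?_
  letI t : TopologicalSpace X := ⊥
  haveI : DiscreteTopology X := ⟨rfl⟩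
  constructor
  · intro h x
    exact h.preimage (f := fun r : unitInterval => (x, r)) (by fun_prop)
  · intro h
    have : {q : X × unitInterval | noodlePt q.1 q.2 ∈ U} =
        ⋃ x, ({x} : Set X) ×ˢ {r | noodlePt x r ∈ U} := by
      ext ⟨x, r⟩; simp
    rw [this]
    exact isOpen_iUnion fun x => (isOpen_discrete _).prod (h x)

theorem noodlePt_continuous [TopologicalSpace X] (x : X) :
    Continuous (fun r => noodlePt x r) :=
  continuous_def.2 fun _ hU => (noodle_isOpen.1 hU).2 x

/-- good parameters -/
def nO [TopologicalSpace X] (x : X) : Set unitInterval := {r | 0 < r ∨ IsOpen ({x} : Set X)}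

def nT [TopologicalSpace X] (x : X) : Set (Noodles X) := (noodlePt x) '' (nO x)

def nR (X : Type*) [TopologicalSpace X] : Set (Noodles X) := ⋃ x : X, nT x

theorem pt_mem_nT [TopologicalSpace X] {x y : X} {r : unitInterval} :
    noodlePt x r ∈ nT y ↔ x = y ∧ r ∈ nO y := by
  constructor
  · rintro ⟨s, hs, h⟩
    obtain ⟨rfl, rfl⟩ := noodlePt_inj.1 h
    exact ⟨rfl, hs⟩
  · rintro ⟨rfl, h⟩; exact ⟨r, h, rfl⟩

theorem pt_mem_nR [TopologicalSpace X] {x : X} {r : unitInterval} :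
    noodlePt x r ∈ nR X ↔ r ∈ nO x := by
  simp [nR, pt_mem_nT]

theorem isOpen_img [TopologicalSpace X] {x : X} {O : Set unitInterval} (hO : IsOpen O)
    (h : O ⊆ nO x) : IsOpen ((noodlePt x) '' O) := by
  rw [noodle_isOpen]
  constructor
  · by_cases h0 : (0 : unitInterval) ∈ O
    · have h1 : IsOpen ({x} : Set X) := by
        rcases h h0 with h2 | h2
        · exact absurd h2 (lt_irrefl _)
        · exact h2
      convert h1 using 1
      ext y
      simp only [mem_setOf_eq, mem_image, noodlePt_inj, mem_singleton_iff]
      constructor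
      · rintro ⟨s, _, h, _⟩; exact h.symm
      · rintro rfl; exact ⟨0, h0, rfl, rfl⟩
    · convert isOpen_empty using 1
      ext y
      simp only [mem_setOf_eq, mem_image, noodlePt_inj, mem_empty_iff_false, iff_false]
      rintro ⟨s, hs, _, rfl⟩; exact h0 hs
  · intro y
    by_cases hy : x = y
    · subst hy
      convert hO using 1
      ext r
      simp [noodlePt_inj]
    · convert isOpen_empty using 1
      ext r
      simp [noodlePt_inj, hy]

theorem isOpen_nO [TopologicalSpace X] (x : X) : IsOpen (nO x) := by
  by_cases h : IsOpen ({x} : Set X)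
  · convert isOpen_univ using 1
    ext r; simp [nO, h]
  · have : nO x = Ioi 0 := by ext r; simp [nO, h]
    rw [this]; exact isOpen_Ioi

theorem ordC_nO [TopologicalSpace X] (x : X) : OrdConnected (nO x) := by
  constructor
  rintro a (ha | ha) b hb c hc
  · exact Or.inl (ha.trans_le hc.1)
  · exact Or.inr ha

theorem preconn_I {S : Set unitInterval} (hS : OrdConnected S) : IsPreconnected S :=
  hS.isPreconnected

theorem isOpen_nT [TopologicalSpace X] (x : X) : IsOpen (nT x) :=
  isOpen_img (isOpen_nO x) Subset.rfl

theorem isOpen_nR [TopologicalSpace X] : IsOpen (nR X) :=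
  isOpen_iUnion isOpen_nT

/-- the complement of a set inside an arc, within R -/
theorem isOpen_nR_diff [TopologicalSpace X] {x : X} {K : Set unitInterval} (hK : IsClosed K) :
    IsOpen (nR X \ (noodlePt x '' K)) := by
  have : nR X \ (noodlePt x '' K) =
      (⋃ y ∈ {y | y ≠ x}, nT y) ∪ noodlePt x '' (nO x \ K) := by
    ext p
    obtain ⟨y, r, rfl⟩ := noodle_surj p
    simp only [mem_diff, pt_mem_nR, mem_image, noodlePt_inj, mem_union, mem_iUnion, pt_mem_nT,
      mem_setOf_eq]
    by_cases h : y = x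
    · subst h; simp
    · have h' : x ≠ y := fun e => h e.symm
      simp [h, h']
  rw [this]
  exact (isOpen_biUnion fun y _ => isOpen_nT y).union
    (isOpen_img ((isOpen_nO x).sdiff hK) diff_subset)

open Classical in
noncomputable def nrho (z : X) (p : Noodles X) : unitInterval :=
  if h : ∃ r, p = noodlePt z r then h.choose else 0

theorem nrho_self (z : X) (r : unitInterval) : nrho z (noodlePt z r) = r := by
  have h : ∃ s, noodlePt z r = noodlePt z s := ⟨r, rfl⟩
  unfold nrho
  rw [dif_pos h]
  exact (noodlePt_inj.1 h.choose_spec).2.symm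

theorem nrho_ne {z y : X} (h : y ≠ z) (r : unitInterval) : nrho z (noodlePt y r) = 0 := by
  unfold nrho
  rw [dif_neg]
  rintro ⟨s, hs⟩
  exact h (noodlePt_inj.1 hs).1

theorem nrho_zero (z y : X) : nrho z (noodlePt y 0) = 0 := by
  by_cases h : y = z
  · subst h; exact nrho_self _ _
  · exact nrho_ne h _

theorem nrho_pos {z : X} {p : Noodles X} (h : nrho z p ≠ 0) : p = noodlePt z (nrho z p) := by
  obtain ⟨y, r, rfl⟩ := noodle_surj p
  by_cases e : y = z
  · subst e; rw [nrho_self]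
  · exact absurd (nrho_ne e r) h

theorem nrho_continuous [TopologicalSpace X] (z : X) : Continuous (nrho z) := by
  rw [continuous_def]
  intro U hU
  rw [noodle_isOpen]
  constructor
  · simp only [mem_preimage, nrho_zero]
    exact isOpen_const
  · intro y
    by_cases h : y = z
    · subst h
      simp only [mem_preimage, nrho_self]
      exact hU
    · simp only [mem_preimage, nrho_ne h]
      exact isOpen_const

theorem zero_of_ends {φ : unitInterval → unitInterval} (hφ : Continuous φ)
    (hinj : ∀ s t, φ s ≠ 0 → φ s = φ t → s = t) {a b c : unitInterval}
    (ha : φ a = 0) (hb : φ b = 0) (hac : a ≤ c) (hcb : c ≤ b) : φ c = 0 := by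
  by_contra hc
  have hpos : 0 < φ c := lt_of_le_of_ne (unitInterval.nonneg _) (Ne.symm hc)
  obtain ⟨l, hl0, hlc⟩ := exists_between hpos
  have h1 : l ∈ φ '' Icc a c :=
    (intermediate_value_Icc hac hφ.continuousOn) ⟨by rw [ha]; exact hl0.le, hlc.le⟩
  have h2 : l ∈ φ '' Icc c b :=
    (intermediate_value_Icc' hcb hφ.continuousOn) ⟨by rw [hb]; exact hl0.le, hlc.le⟩
  obtain ⟨s, hs, hs'⟩ := h1
  obtain ⟨t, ht, ht'⟩ := h2
  have hst : s = t := hinj s t (by rw [hs']; exact hl0.ne') (by rw [hs', ht'])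
  subst hst
  have : s = c := le_antisymm hs.2 ht.1
  subst this
  exact hlc.ne hs'.symm

/-- three points of X in a time-ordered way cannot lie on an arc -/
theorem no_three [TopologicalSpace X] (h : Noodles X ≃ₜ Noodles X) {x : X}
    {t1 t2 t3 : unitInterval} {y1 y2 y3 : X} (h1 : t1 ∈ nO x)
    (h12 : t1 < t2) (h23 : t2 < t3)
    (e1 : h (noodlePt x t1) = noodlePt y1 0) (e2 : h (noodlePt x t2) = noodlePt y2 0)
    (e3 : h (noodlePt x t3) = noodlePt y3 0) : False := by
  have hsub : Ioo t1 t3 ⊆ nO x := fun r hr => by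
    rcases h1 with h1 | h1
    · exact Or.inl (h1.trans hr.1)
    · exact Or.inr h1
  have hV : IsOpen (h '' (noodlePt x '' Ioo t1 t3)) :=
    h.isOpenMap _ (isOpen_img isOpen_Ioo hsub)
  have hy2 : noodlePt y2 0 ∈ h '' (noodlePt x '' Ioo t1 t3) :=
    ⟨_, ⟨t2, ⟨h12, h23⟩, rfl⟩, e2⟩
  have hf := (noodle_isOpen.1 hV).2 y2
  obtain ⟨r, hr0, hr⟩ : ∃ r : unitInterval, 0 < r ∧
      noodlePt y2 r ∈ h '' (noodlePt x '' Ioo t1 t3) := by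
    have hn : {r | noodlePt y2 r ∈ h '' (noodlePt x '' Ioo t1 t3)} ∈ 𝓝 (0 : unitInterval) :=
      hf.mem_nhds hy2
    obtain ⟨u, hu, hu'⟩ := exists_Ico_subset_of_mem_nhds hn ⟨1, zero_lt_one⟩
    obtain ⟨r, hr, hr'⟩ := exists_between hu
    exact ⟨r, hr, hu' ⟨hr.le, hr'⟩⟩
  obtain ⟨_, ⟨t, ht, rfl⟩, htr⟩ := hr
  have hz := zero_of_ends (φ := fun t => nrho y2 (h (noodlePt x t)))
    ((nrho_continuous y2).comp (h.continuous.comp (noodlePt_continuous x)))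
    (fun s t hs hst => by
      have a1 := nrho_pos hs
      have a2 := nrho_pos (p := h (noodlePt x t)) (z := y2) (by simpa only [← hst] using hs)
      rw [← hst, ← a1] at a2
      exact ((noodlePt_inj.1 (h.injective a2)).2).symm)
    (a := t1) (b := t3) (c := t) (by simp only [e1, nrho_zero]) (by simp only [e3, nrho_zero])
    ht.1.le ht.2.le
  simp only [htr, nrho_self] at hz
  exact hr0.ne' hz

theorem map_nR [TopologicalSpace X] (h : Noodles X ≃ₜ Noodles X) {p : Noodles X}
    (hp : p ∈ nR X) : h p ∈ nR X := by
  obtain ⟨x, s, rfl⟩ := noodle_surj p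
  rw [pt_mem_nR] at hp
  obtain ⟨y, r, hy⟩ := noodle_surj (h (noodlePt x s))
  rw [hy, pt_mem_nR]
  by_cases hr : 0 < r
  · exact Or.inl hr
  right
  have hr : r = 0 := le_antisymm (not_lt.1 hr) (unitInterval.nonneg _)
  subst hr
  -- any set of at most two points
  have key : ∀ t y', t ∈ nO x → h (noodlePt x t) = noodlePt y' 0 →
      ∀ t' y'', t' ∈ nO x → h (noodlePt x t') = noodlePt y'' 0 → t ≠ s → t' ≠ s → t = t' := by
    intro t y' ht e t' y'' ht' e' hs hs'
    by_contra hne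
    rcases lt_or_gt_of_ne hne with a | a <;> rcases lt_or_gt_of_ne hs with b | b <;>
      rcases lt_or_gt_of_ne hs' with c | c
    · exact no_three h ht a c e e' hy
    · exact no_three h ht b c e hy e'
    · exact absurd (a.trans c) (not_lt.2 b.le)
    · exact no_three h hp b a hy e e'
    · exact no_three h ht' a b e' e hy
    · exact absurd (a.trans b) (not_lt.2 c.le)
    · exact no_three h ht' c b e' hy e
    · exact no_three h hp c a hy e' e
  have fin : ∀ O : Set unitInterval, IsOpen O → O ⊆ nO x → s ∈ O →
      (∀ t ∈ O, ∀ y', h (noodlePt x t) = noodlePt y' 0 → t = s) → IsOpen ({y} : Set X) := by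
    intro O hO hOs hsO hu
    have hV : IsOpen (h '' (noodlePt x '' O)) := h.isOpenMap _ (isOpen_img hO hOs)
    convert (noodle_isOpen.1 hV).1 using 1
    ext y'
    simp only [mem_singleton_iff, mem_setOf_eq]
    constructor
    · rintro rfl; exact ⟨_, ⟨s, hsO, rfl⟩, hy⟩
    · rintro ⟨_, ⟨t, ht, rfl⟩, e⟩
      have := hu t ht y' e
      subst this
      exact (noodlePt_inj.1 (e.symm.trans hy)).1
  by_cases hex : ∃ t ∈ nO x, ∃ y', h (noodlePt x t) = noodlePt y' 0 ∧ t ≠ s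
  · obtain ⟨t, ht, y', e, hne⟩ := hex
    refine fin (nO x \ {t}) ((isOpen_nO x).sdiff isClosed_singleton) diff_subset
      ⟨hp, fun a => hne a.symm⟩ ?_
    rintro t' ⟨ht', hn⟩ y'' e'
    by_contra hs'
    exact hn (key t y' ht e t' y'' ht' e' hne hs').symm
  · push Not at hex
    exact fin (nO x) (isOpen_nO x) Subset.rfl hp fun t ht y' e => hex t ht y' e

theorem map_nR_iff [TopologicalSpace X] (h : Noodles X ≃ₜ Noodles X) {p : Noodles X} :
    h p ∈ nR X ↔ p ∈ nR X :=
  ⟨fun hp => by simpa using map_nR h.symm hp, map_nR h⟩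

theorem map_nT [TopologicalSpace X] (h : Noodles X ≃ₜ Noodles X) {x z : X} {p : Noodles X}
    (hp : p ∈ nT x) (hz : h p ∈ nT z) : h '' nT x ⊆ nT z := by
  have hpre : IsPreconnected (h '' nT x) :=
    ((preconn_I (ordC_nO x)).image _ (noodlePt_continuous x).continuousOn).image _
      h.continuous.continuousOn
  have ho : IsOpen (nR X \ (noodlePt z '' univ)) := isOpen_nR_diff isClosed_univ
  refine hpre.subset_left_of_subset_union (isOpen_nT z) ho ?_ ?_ ⟨_, ⟨p, hp, rfl⟩, hz⟩
  · rw [disjoint_left]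
    rintro q ⟨r, _, rfl⟩ hq
    exact hq.2 ⟨r, trivial, rfl⟩
  · rintro q ⟨p', hp', rfl⟩
    have : h p' ∈ nR X := map_nR h (mem_iUnion.2 ⟨x, hp'⟩)
    obtain ⟨y, r, e⟩ := noodle_surj (h p')
    rw [e] at this ⊢
    rw [pt_mem_nR] at this
    by_cases hy : y = z
    · subst hy; left; exact pt_mem_nT.2 ⟨rfl, this⟩
    · right; refine ⟨pt_mem_nR.2 this, ?_⟩
      rintro ⟨s, _, hs⟩; exact hy (noodlePt_inj.1 hs).1.symm

theorem noniso_of [TopologicalSpace X] (h : Noodles X ≃ₜ Noodles X) {x z : X} {p : Noodles X}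
    (hp : p ∈ nT x) (hz : h p ∈ nT z) (hx : ¬ IsOpen ({x} : Set X)) :
    ¬ IsOpen ({z} : Set X) := by
  intro hzo
  have h1 : h '' nT x = nT z := by
    refine (map_nT h hp hz).antisymm ?_
    intro q hq
    have := map_nT h.symm hz (z := x) (by simpa using hp) ⟨q, hq, rfl⟩
    exact ⟨_, this, by simp⟩
  have h2 : nT z = noodlePt z '' univ := by
    unfold nT; congr 1; ext r; simp [nO, hzo]
  have h3 : IsCompact (h '' nT x) := by
    rw [h1, h2]; exact isCompact_univ.image (noodlePt_continuous z)
  have h4 : IsCompact (nT x) := h.isCompact_image.1 h3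
  have h5 : IsCompact (nrho x '' nT x) := h4.image (nrho_continuous x)
  have h6 : nrho x '' nT x = Ioi 0 := by
    unfold nT
    rw [image_image]
    simp only [nrho_self, image_id']
    ext r; simp [nO, hx]
  rw [h6] at h5
  have h7 := h5.isClosed.closure_eq
  rw [closure_Ioi' ⟨1, zero_lt_one⟩] at h7
  have : (0 : unitInterval) ∈ Ioi (0 : unitInterval) := h7 ▸ (self_mem_Ici)
  exact lt_irrefl _ (mem_Ioi.1 this)

theorem spec_aux [TopologicalSpace X] (h : Noodles X ≃ₜ Noodles X) {x z : X} {p : Noodles X}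
    (hp : p ∈ nT x) (hz : h p ∈ nT z) (hx : ¬ IsOpen ({x} : Set X)) :
    noodlePt z 0 ⤳ h (noodlePt x 0) := by
  have hzn := noniso_of h hp hz hx
  rw [specializes_iff_forall_open]
  intro W hW hxW
  by_contra hzW
  have hx0 : h (noodlePt x 0) ∉ nR X := by
    rw [map_nR_iff, pt_mem_nR]; simp [nO, hx]
  have hW' : IsOpen (W \ nT z) := by
    rw [noodle_isOpen] at hW ⊢
    constructor
    · convert hW.1 using 1
      ext y
      simp only [mem_diff, mem_setOf_eq, pt_mem_nT, and_iff_left_iff_imp]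
      rintro _ ⟨rfl, h0⟩
      rcases h0 with h0 | h0
      · exact lt_irrefl _ h0
      · exact hzn h0
    · intro y
      by_cases hy : y = z
      · subst hy
        convert isOpen_empty using 1
        ext r
        simp only [mem_diff, mem_setOf_eq, pt_mem_nT, mem_empty_iff_false, iff_false]
        rintro ⟨a, b⟩
        by_cases hr : 0 < r
        · exact b ⟨trivial, Or.inl hr⟩
        · have hr : r = 0 := le_antisymm (not_lt.1 hr) (unitInterval.nonneg _)
          subst hr; exact hzW a
      · convert hW.2 y using 1
        ext r
        simp [pt_mem_nT, hy]
  have hmem : h (noodlePt x 0) ∈ W \ nT z := ⟨hxW, fun a => hx0 (mem_iUnion.2 ⟨z, a⟩)⟩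
  have hn : {r | h (noodlePt x r) ∈ W \ nT z} ∈ 𝓝 (0 : unitInterval) :=
    (hW'.preimage (h.continuous.comp (noodlePt_continuous x))).mem_nhds hmem
  obtain ⟨u, hu, hu'⟩ := exists_Ico_subset_of_mem_nhds hn ⟨1, zero_lt_one⟩
  obtain ⟨r, hr, hr'⟩ := exists_between hu
  exact (hu' ⟨hr.le, hr'⟩).2 (map_nT h hp hz ⟨_, ⟨r, Or.inl hr, rfl⟩, rfl⟩)

theorem insep_aux [TopologicalSpace X] (h : Noodles X ≃ₜ Noodles X) {x z : X} {p : Noodles X}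
    (hp : p ∈ nT x) (hz : h p ∈ nT z) (hx : ¬ IsOpen ({x} : Set X)) :
    Inseparable (noodlePt z 0) (h (noodlePt x 0)) := by
  refine (spec_aux h hp hz hx).antisymm ?_
  have := (spec_aux h.symm hz (z := x) (by simpa using hp) (noniso_of h hp hz hx)).map h.continuous
  simpa using this

theorem ev_cont [TopologicalSpace X] (p : Noodles X) :
    Continuous (fun f : Noodles X ≃ₜ Noodles X => f p) :=
  (continuous_apply p).comp continuous_induced_dom

theorem near_insep [TopologicalSpace X] (f : Noodles X ≃ₜ Noodles X) {p : Noodles X}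
    (hp : p ∉ nR X) : ∀ᶠ f' in 𝓝 f, Inseparable (f' p) (f p) := by
  obtain ⟨x, r, rfl⟩ := noodle_surj p
  rw [pt_mem_nR] at hp
  have hx : ¬ IsOpen ({x} : Set X) := fun a => hp (Or.inr a)
  have hr : r = 0 := le_antisymm (not_lt.1 fun a => hp (Or.inl a)) (unitInterval.nonneg _)
  subst hr
  have h1 : noodlePt x 1 ∈ nT x := ⟨1, Or.inl zero_lt_one, rfl⟩
  obtain ⟨z, hz⟩ := mem_iUnion.1 (map_nR f (mem_iUnion.2 ⟨x, h1⟩))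
  filter_upwards [((isOpen_nT z).preimage (ev_cont (noodlePt x 1))).mem_nhds hz] with f' hf'
  exact (insep_aux f' h1 hf' hx).symm.trans (insep_aux f h1 hz hx)

theorem sep_nR [TopologicalSpace X] {p q : Noodles X} (hp : p ∈ nR X) (hq : q ∈ nR X)
    (hne : p ≠ q) : ∃ U V : Set (Noodles X), IsOpen U ∧ IsOpen V ∧ p ∈ U ∧ q ∈ V ∧
      Disjoint U V := by
  obtain ⟨x, r, rfl⟩ := noodle_surj p
  obtain ⟨y, s, rfl⟩ := noodle_surj q
  rw [pt_mem_nR] at hp hq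
  by_cases h : x = y
  · subst h
    have hrs : r ≠ s := fun e => hne (by rw [e])
    obtain ⟨U, V, hU, hV, hr, hs, hd⟩ := t2_separation hrs
    refine ⟨_, _, isOpen_img (hU.inter (isOpen_nO x)) inter_subset_right,
      isOpen_img (hV.inter (isOpen_nO x)) inter_subset_right, ⟨r, ⟨hr, hp⟩, rfl⟩,
      ⟨s, ⟨hs, hq⟩, rfl⟩, ?_⟩
    rw [disjoint_left]
    rintro _ ⟨a, ha, rfl⟩ ⟨b, hb, e⟩
    have := (noodlePt_inj.1 e).2
    subst this
    exact disjoint_left.1 hd ha.1 hb.1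
  · refine ⟨_, _, isOpen_nT x, isOpen_nT y, ⟨r, hp, rfl⟩, ⟨s, hq, rfl⟩, ?_⟩
    rw [disjoint_left]
    rintro _ ⟨a, ha, rfl⟩ ⟨b, hb, e⟩
    exact h (noodlePt_inj.1 e).1.symm

theorem inv_joint [TopologicalSpace X] (f : Noodles X ≃ₜ Noodles X) {p : Noodles X}
    (hp : p ∈ nR X) :
    ContinuousAt (fun a : (Noodles X ≃ₜ Noodles X) × Noodles X => a.1.symm a.2) (f, p) := by
  have hq : f.symm p ∈ nR X := map_nR _ hp
  obtain ⟨z, t, hzt⟩ := noodle_surj (f.symm p)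
  rw [hzt, pt_mem_nR] at hq
  have hfp : f (noodlePt z t) = p := by rw [← hzt]; simp
  obtain ⟨x, s, rfl⟩ := noodle_surj p
  have hp' := pt_mem_nR.1 hp
  show Tendsto _ _ (𝓝 (f.symm (noodlePt x s)))
  rw [hzt, (nhds_basis_opens _).tendsto_right_iff]
  rintro W ⟨htW, hW⟩
  -- choose the interval
  have hN : {r | noodlePt z r ∈ W} ∩ nO z ∈ 𝓝 t :=
    inter_mem (((noodle_isOpen.1 hW).2 z).mem_nhds htW) ((isOpen_nO z).mem_nhds hq)
  obtain ⟨a, b, htab, hab, habs⟩ := exists_Icc_mem_subset_of_mem_nhds hN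
  -- separation from end points
  have hsep : ∀ k ∈ nO z, ∃ U V : Set (Noodles X), IsOpen U ∧ IsOpen V ∧ noodlePt x s ∈ U ∧
      f (noodlePt z k) ∈ V ∧ (k ≠ t → Disjoint U V) := by
    intro k hk
    by_cases hkt : k = t
    · exact ⟨univ, univ, isOpen_univ, isOpen_univ, trivial, trivial, fun h => absurd hkt h⟩
    · obtain ⟨U, V, hU, hV, h1, h2, h3⟩ := sep_nR hp (map_nR f (pt_mem_nR.2 hk)) (by
        rw [← hfp]; intro e; exact hkt (noodlePt_inj.1 (f.injective e)).2.symm)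
      exact ⟨U, V, hU, hV, h1, h2, fun _ => h3⟩
  have hle : a ≤ b := htab.1.trans htab.2
  obtain ⟨Ua, Va, hUa, hVa, ha1, ha2, ha3⟩ := hsep a (habs (left_mem_Icc.2 hle)).2
  obtain ⟨Ub, Vb, hUb, hVb, hb1, hb2, hb3⟩ := hsep b (habs (right_mem_Icc.2 hle)).2
  have hM : {r | noodlePt x r ∈ Ua ∩ Ub} ∩ nO x ∈ 𝓝 s :=
    inter_mem (((noodle_isOpen.1 (hUa.inter hUb)).2 x).mem_nhds ⟨ha1, hb1⟩)
      ((isOpen_nO x).mem_nhds hp')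
  obtain ⟨c, d, hscd, hcd, hcds⟩ := exists_Icc_mem_subset_of_mem_nhds hM
  have hCn : noodlePt x '' (interior (Icc c d)) ∈ 𝓝 (noodlePt x s) :=
    (isOpen_img isOpen_interior (fun r hr => (hcds (interior_subset hr)).2)).mem_nhds
      ⟨s, mem_interior_iff_mem_nhds.2 hcd, rfl⟩
  have hC : noodlePt x '' (Icc c d) ∈ 𝓝 (noodlePt x s) :=
    mem_of_superset hCn (image_mono interior_subset)
  have e1 : ∀ᶠ f' in 𝓝 f, f' (noodlePt z t) ∈ noodlePt x '' (Icc c d) :=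
    (ev_cont (noodlePt z t)).continuousAt.eventually (by simp only [hfp]; exact hC)
  have e2 : ∀ᶠ f' in 𝓝 f, f' (noodlePt z a) ∈ Va :=
    (ev_cont (noodlePt z a)).continuousAt.eventually (hVa.mem_nhds ha2)
  have e3 : ∀ᶠ f' in 𝓝 f, f' (noodlePt z b) ∈ Vb :=
    (ev_cont (noodlePt z b)).continuousAt.eventually (hVb.mem_nhds hb2)
  rw [nhds_prod_eq]
  filter_upwards [prod_mem_prod (e1.and (e2.and e3)) hC]
  rintro ⟨f', p'⟩ ⟨⟨h1, h2, h3⟩, hp'C⟩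
  have hpre : IsPreconnected (noodlePt x '' Icc c d) :=
    (preconn_I ordConnected_Icc).image _ (noodlePt_continuous x).continuousOn
  have ho1 : IsOpen (f' '' (noodlePt z '' interior (Icc a b))) :=
    f'.isOpenMap _ (isOpen_img isOpen_interior fun r hr => (habs (interior_subset hr)).2)
  have ho2 : IsOpen (f' '' (nR X \ (noodlePt z '' Icc a b))) :=
    f'.isOpenMap _ (isOpen_nR_diff isClosed_Icc)
  have hsub : noodlePt x '' Icc c d ⊆ f' '' (noodlePt z '' interior (Icc a b)) := by
    refine hpre.subset_left_of_subset_union ho1 ho2 ?_ ?_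
      ⟨_, h1, ⟨_, ⟨t, mem_interior_iff_mem_nhds.2 hab, rfl⟩, rfl⟩⟩
    · rw [disjoint_image_iff f'.injective, disjoint_left]
      rintro _ ⟨r, hr, rfl⟩ h
      exact h.2 ⟨r, interior_subset hr, rfl⟩
    · rintro _ ⟨r, hr, rfl⟩
      have hrR : f'.symm (noodlePt x r) ∈ nR X := map_nR _ (pt_mem_nR.2 (hcds hr).2)
      by_cases hK : f'.symm (noodlePt x r) ∈ noodlePt z '' Icc a b
      · left
        obtain ⟨k, hk, hke⟩ := hK
        have hke' : f' (noodlePt z k) = noodlePt x r := by rw [hke]; simp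
        refine ⟨_, ⟨k, ?_, rfl⟩, hke'⟩
        by_cases hkt : k = t
        · rw [hkt]; exact mem_interior_iff_mem_nhds.2 hab
        have hka : a ≠ k := by
          rintro rfl
          rw [hke'] at h2
          exact disjoint_left.1 (ha3 hkt) (hcds hr).1.1 h2
        have hkb : k ≠ b := by
          rintro rfl
          rw [hke'] at h3
          exact disjoint_left.1 (hb3 hkt) (hcds hr).1.2 h3
        exact interior_maximal Ioo_subset_Icc_self isOpen_Ioo
          ⟨lt_of_le_of_ne hk.1 hka, lt_of_le_of_ne hk.2 hkb⟩
      · right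
        exact ⟨_, ⟨hrR, hK⟩, by simp⟩
  obtain ⟨_, ⟨k, hk, rfl⟩, e⟩ := hsub hp'C
  have hk' := (habs (interior_subset hk)).1
  simp only at e
  show f'.symm p' ∈ W
  rw [← e]; simpa using hk'

theorem inv_cont [TopologicalSpace X] :
    Continuous (fun f : Noodles X ≃ₜ Noodles X => f.symm) := by
  refine continuous_induced_rng.2 (continuous_pi fun p => continuous_iff_continuousAt.2 fun f => ?_)
  show Tendsto (fun f : Noodles X ≃ₜ Noodles X => f.symm p) (𝓝 f) (𝓝 (f.symm p))
  by_cases hp : p ∈ nR X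
  · exact (inv_joint f hp).tendsto.comp ((continuous_id.prodMk continuous_const).tendsto' f (f, p) rfl)
  · have hq : f.symm p ∉ nR X := fun h => hp ((map_nR_iff _).1 h)
    rw [(nhds_basis_opens _).tendsto_right_iff]
    rintro W ⟨hW1, hW⟩
    filter_upwards [near_insep f hq] with f' hf'
    have := hf'.map f'.symm.continuous
    simp only [Homeomorph.symm_apply_apply, Homeomorph.apply_symm_apply] at this
    exact (this.mem_open_iff hW).1 hW1

theorem comp_cont [TopologicalSpace X] :
    Continuous (fun p : (Noodles X ≃ₜ Noodles X) × (Noodles X ≃ₜ Noodles X) =>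
      p.2.trans p.1) := by
  refine continuous_induced_rng.2 (continuous_pi fun p => continuous_iff_continuousAt.2 ?_)
  rintro ⟨f, g⟩
  show Tendsto (fun a : (Noodles X ≃ₜ Noodles X) × (Noodles X ≃ₜ Noodles X) => a.1 (a.2 p))
    (𝓝 (f, g)) (𝓝 (f (g p)))
  by_cases hp : p ∈ nR X
  · have h1 := (inv_joint f.symm (map_nR g hp)).tendsto
    have h2 : Tendsto (fun a : (Noodles X ≃ₜ Noodles X) × (Noodles X ≃ₜ Noodles X) =>
        (a.1.symm, a.2 p)) (𝓝 (f, g)) (𝓝 (f.symm, g p)) :=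
      ((inv_cont.comp continuous_fst).prodMk ((ev_cont p).comp continuous_snd)).tendsto' _ _ rfl
    exact h1.comp h2
  · rw [(nhds_basis_opens _).tendsto_right_iff]
    rintro W ⟨hW1, hW⟩
    have e1 : ∀ᶠ f' in 𝓝 f, f' (g p) ∈ W :=
      (ev_cont (g p)).continuousAt.eventually (hW.mem_nhds hW1)
    rw [nhds_prod_eq]
    filter_upwards [prod_mem_prod e1 (near_insep g hp)]
    rintro ⟨f', g'⟩ ⟨h1, h2⟩
    exact ((Inseparable.map h2 f'.continuous).mem_open_iff hW).2 h1

end NoodleHelpers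

/-- For any topological space `X`, `Hom_p(XI)` is a topological group: composition is
jointly continuous and inversion is continuous, where `XI` is the Alexandroff Noodles. -/
theorem noodles_homP_topologicalGroup (X : Type*) [TopologicalSpace X] :
    Continuous[@instTopologicalSpaceProd _ _ (homPTop (Noodles X)) (homPTop (Noodles X)),
        homPTop (Noodles X)]
      (fun p : (Noodles X ≃ₜ Noodles X) × (Noodles X ≃ₜ Noodles X) => p.2.trans p.1) ∧
    Continuous[homPTop (Noodles X), homPTop (Noodles X)]
      (fun f : Noodles X ≃ₜ Noodles X => f.symm) := by
  exact ⟨comp_cont, inv_cont⟩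
end

section
/- Let X be a topological space that is locally unique at every point. Then the topology of Hom_p(X) coincides with the topology of Hom_d(X), and consequently Hom_p(X) is a topological group. -/
open Topology

/-- The topology of `Hom_d(X)`: generated by the subbasis of all sets
`{h ∈ Hom(X) : h(x) = y}` for `x, y ∈ X`. -/
def homDTop (X : Type*) [TopologicalSpace X] : TopologicalSpace (X ≃ₜ X) :=
  TopologicalSpace.generateFrom {S | ∃ x y : X, S = {h : X ≃ₜ X | h x = y}}

/-- `X` is locally unique at `x` if some open neighborhood `O` of `x` contains no point of
`O \ {x}` to which `x` is equivalent (i.e. no self-homeomorphism of `X` maps `x` into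
`O \ {x}`). -/
def LocallyUniqueAt (X : Type*) [TopologicalSpace X] (x : X) : Prop :=
  ∃ O : Set X, IsOpen O ∧ x ∈ O ∧ ∀ y ∈ O \ {x}, ∀ f : X ≃ₜ X, f x ≠ y

theorem homD_isOpen_aux (X : Type*) [TopologicalSpace X] (x y : X) :
    IsOpen[homDTop X] {f : X ≃ₜ X | f x = y} :=
  TopologicalSpace.isOpen_generateFrom_of_mem ⟨x, y, rfl⟩

theorem homP_eq_aux (X : Type*) [TopologicalSpace X]
    (h : ∀ x : X, LocallyUniqueAt X x) : homPTop X = homDTop X := by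
  apply le_antisymm
  · refine le_generateFrom ?_
    rintro S ⟨x, y, rfl⟩
    by_cases hne : ∃ f₀ : X ≃ₜ X, f₀ x = y
    · obtain ⟨f₀, hf₀⟩ := hne
      obtain ⟨O, hO, hyO, hu⟩ := h y
      have e : {f : X ≃ₜ X | f x = y} = (fun f : X ≃ₜ X => (f : X → X)) ⁻¹' {g | g x ∈ O} := by
        ext f
        constructor
        · intro hf
          have hf' : f x = y := hf
          show f x ∈ O
          rw [hf']; exact hyO
        · intro hf
          by_contra hc
          refine hu (f x) ⟨hf, hc⟩ (f₀.symm.trans f) ?_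
          simp [← hf₀]
      rw [e]
      exact isOpen_induced (hO.preimage (continuous_apply x))
    · have e : {f : X ≃ₜ X | f x = y} = ∅ := by
        ext f
        simpa using fun hf => hne ⟨f, hf⟩
      rw [e]
      exact @isOpen_empty _ (homPTop X)
  · letI := homDTop X
    refine continuous_iff_le_induced.1 (continuous_pi fun x => ⟨fun U _ => ?_⟩)
    have e : (fun f : X ≃ₜ X => f x) ⁻¹' U = ⋃ y ∈ U, {f : X ≃ₜ X | f x = y} := by
      ext f; simp
    rw [e]
    exact isOpen_biUnion fun y _ => homD_isOpen_aux X x y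

/-- If `X` is locally unique at every point, then the topology of `Hom_p(X)` coincides with
that of `Hom_d(X)`, and consequently `Hom_p(X)` is a topological group. -/
theorem homP_eq_homD_of_locallyUnique (X : Type*) [TopologicalSpace X]
    (h : ∀ x : X, LocallyUniqueAt X x) :
    homPTop X = homDTop X ∧
    (Continuous[@instTopologicalSpaceProd _ _ (homPTop X) (homPTop X), homPTop X]
        (fun p : (X ≃ₜ X) × (X ≃ₜ X) => p.2.trans p.1) ∧
     Continuous[homPTop X, homPTop X] (fun f : X ≃ₜ X => f.symm)) := by
  have e := homP_eq_aux X h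
  refine ⟨e, ?_⟩
  rw [e]
  letI := homDTop X
  constructor
  · refine continuous_generateFrom_iff.2 ?_
    rintro S ⟨x, y, rfl⟩
    have e2 : (fun p : (X ≃ₜ X) × (X ≃ₜ X) => p.2.trans p.1) ⁻¹' {f : X ≃ₜ X | f x = y}
        = ⋃ z, {f : X ≃ₜ X | f z = y} ×ˢ {g : X ≃ₜ X | g x = z} := by
      ext p; simp
    rw [e2]
    exact isOpen_iUnion fun z => (homD_isOpen_aux X z y).prod (homD_isOpen_aux X x z)
  · refine continuous_generateFrom_iff.2 ?_
    rintro S ⟨x, y, rfl⟩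
    have e2 : (fun f : X ≃ₜ X => f.symm) ⁻¹' {f : X ≃ₜ X | f x = y}
        = {f : X ≃ₜ X | f y = x} := by
      ext f
      simp only [Set.mem_preimage, Set.mem_setOf_eq]
      exact f.toEquiv.symm_apply_eq.trans eq_comm
    rw [e2]
    exact homD_isOpen_aux X y x
end

section
/- Let X be a Tychonoff (completely regular T1) space with no isolated points such that Hom_p(X) is a topological group. Then for every subset Y ⊆ X, Hom_p(XY') is a topological group, where XY' is the partial Alexandroff double of X over Y. -/
open Topology

/-- The topology of the partial Alexandroff double `XY'` of `X` over `Y ⊆ X`: on the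
underlying set `X ⊕ Y`, the topology generated by all singletons `{y'}` for `y ∈ Y`
together with all sets `(U ∪ (U ∩ Y)') \ F'` for `U` open in `X` and `F'` a finite set of
points of the second summand. -/
def adDoubleTop (X : Type*) [TopologicalSpace X] (Y : Set X) :
    TopologicalSpace (X ⊕ Y) :=
  TopologicalSpace.generateFrom
    ({S | ∃ y : Y, S = {Sum.inr y}} ∪
     {S | ∃ (U : Set X) (F : Set (X ⊕ Y)), IsOpen U ∧ F.Finite ∧ F ⊆ Set.range Sum.inr ∧
        S = ((Sum.inl '' U) ∪ (Sum.inr '' {y : Y | (y : X) ∈ U})) \ F})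

theorem aux_cont_iff {Z A : Type*} [TopologicalSpace Z] [TopologicalSpace A]
    (F : A → (Z ≃ₜ Z)) :
    Continuous[_, homPTop Z] F ↔ ∀ z, Continuous fun a => F a z := by
  unfold homPTop
  rw [continuous_induced_rng]
  exact continuous_pi_iff

theorem aux_eval {Z : Type*} [TopologicalSpace Z] (z : Z) :
    Continuous[homPTop Z, _] fun f : Z ≃ₜ Z => f z :=
  letI := homPTop Z
  (aux_cont_iff (fun f : Z ≃ₜ Z => f)).1 continuous_id z

theorem aux_ev {Z : Type*} [TopologicalSpace Z] (f : Z ≃ₜ Z) (z : Z) (hz : IsOpen {f z}) :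
    ∀ᶠ g in @nhds _ (homPTop Z) f, g z = f z :=
  letI := homPTop Z
  (aux_eval z).continuousAt.eventually (hz.mem_nhds rfl)

theorem aux_iso {Z : Type*} [TopologicalSpace Z] (f : Z ≃ₜ Z) (z : Z) :
    IsOpen {f z} ↔ IsOpen {z} := by
  rw [← Set.image_singleton, f.isOpen_image]

/-- The abstract version. -/
theorem aux_main {X Z : Type*} [TopologicalSpace X] [TopologicalSpace Z] (i : X → Z)
    (hi : IsEmbedding i) (hr : ∀ z, z ∈ Set.range i ↔ ¬ IsOpen {z})
    (hX : IsTopGroupHomP X) : IsTopGroupHomP Z := by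
  have hex : ∀ (f : Z ≃ₜ Z) (x : X), ∃ x', i x' = f (i x) := fun f x =>
    (hr _).2 (by rw [aux_iso]; exact (hr _).1 ⟨x, rfl⟩)
  choose φ hφ using hex
  have hφc : ∀ f, Continuous (φ f) := fun f => by
    rw [hi.continuous_iff]
    have : i ∘ φ f = f ∘ i := funext fun x => hφ f x
    rw [this]
    exact f.continuous.comp hi.continuous
  let Φ : (Z ≃ₜ Z) → (X ≃ₜ X) := fun f =>
    { toFun := φ f
      invFun := φ f.symm
      left_inv := fun x => hi.injective (by simp [hφ])
      right_inv := fun x => hi.injective (by simp [hφ])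
      continuous_toFun := hφc f
      continuous_invFun := hφc f.symm }
  have hΦ : ∀ f x, i (Φ f x) = f (i x) := hφ
  letI tZ := homPTop Z
  letI tX := homPTop X
  have hΦc : Continuous Φ := by
    refine (aux_cont_iff Φ).2 fun x => ?_
    rw [hi.continuous_iff]
    have : (i ∘ fun f => Φ f x) = fun f : Z ≃ₜ Z => f (i x) := funext fun f => hΦ f x
    rw [this]
    exact aux_eval _
  obtain ⟨h1, h2⟩ := hX
  refine ⟨(aux_cont_iff _).2 fun z => ?_, (aux_cont_iff _).2 fun z => ?_⟩
  · by_cases hz : IsOpen {z}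
    · refine continuous_iff_continuousAt.2 fun ⟨f, g⟩ => ?_
      refine Filter.Tendsto.congr' ?_ tendsto_const_nhds
      have a := aux_ev g z ((aux_iso g z).2 hz)
      have b := aux_ev f (g z) ((aux_iso f _).2 ((aux_iso g z).2 hz))
      rw [nhds_prod_eq]
      filter_upwards [b.prod_mk a] with p hp
      simp [hp.1, hp.2]
    · obtain ⟨x, rfl⟩ := (hr z).2 hz
      have h3 : Continuous fun p : (Z ≃ₜ Z) × (Z ≃ₜ Z) => (Φ p.2).trans (Φ p.1) :=
        h1.comp ((hΦc.comp continuous_fst).prodMk (hΦc.comp continuous_snd))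
      have h4 := hi.continuous.comp ((aux_cont_iff _).1 h3 x)
      refine h4.congr fun p => ?_
      simp [hΦ]
  · by_cases hz : IsOpen {z}
    · refine continuous_iff_continuousAt.2 fun f => ?_
      refine Filter.Tendsto.congr' ?_ tendsto_const_nhds
      have a := aux_ev f (f.symm z) (by simpa using hz)
      filter_upwards [a] with g hg
      rw [f.apply_symm_apply] at hg
      change f.symm z = g.symm z
      exact g.injective (by rw [hg, g.apply_symm_apply])
    · obtain ⟨x, rfl⟩ := (hr z).2 hz
      have h4 := hi.continuous.comp ((aux_cont_iff _).1 (h2.comp hΦc) x)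
      refine h4.congr fun p => ?_
      exact hΦ p.symm x

/-- If `X` is a Tychonoff space with no isolated points such that `Hom_p(X)` is a topological
group, then `Hom_p(XY')` is a topological group for every `Y ⊆ X`, where `XY'` is the partial
Alexandroff double of `X` over `Y`. -/
theorem adDouble_homP_topologicalGroup
    {X : Type*} [TopologicalSpace X] [T1Space X] [CompletelyRegularSpace X]
    (hiso : ∀ x : X, ¬ IsOpen ({x} : Set X))
    (hX : IsTopGroupHomP X) (Y : Set X) :
    @IsTopGroupHomP (X ⊕ Y) (adDoubleTop X Y) := by
  letI := adDoubleTop X Y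
  have hc : Continuous (Sum.inl : X → X ⊕ Y) := by
    refine continuous_generateFrom_iff.2 ?_
    rintro S (⟨y, rfl⟩ | ⟨U, F, hU, -, hF, rfl⟩)
    · convert isOpen_empty
      ext x; simp
    · convert hU
      ext x
      have : Sum.inl x ∉ F := fun h => by simpa using hF h
      simp [this]
  refine aux_main (Sum.inl : X → X ⊕ Y) ⟨⟨le_antisymm hc.le_induced ?_⟩, Sum.inl_injective⟩ ?_ hX
  · intro U hU
    refine ⟨_, TopologicalSpace.isOpen_generateFrom_of_mem
      (Or.inr ⟨U, ∅, hU, Set.finite_empty, Set.empty_subset _, rfl⟩), ?_⟩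
    ext x; simp
  · rintro (x | y)
    · simp only [Set.mem_range_self, true_iff]
      intro h
      apply hiso x
      convert h.preimage hc
      ext z; simp
    · have : IsOpen {(Sum.inr y : X ⊕ Y)} :=
        TopologicalSpace.isOpen_generateFrom_of_mem (Or.inl ⟨y, rfl⟩)
      simp [this]
end

section
/- Hom_p(ℝℝ') is a topological group, where ℝℝ' denotes the Alexandroff double of the real line ℝ. -/
open Topology

/-- The topology of the Alexandroff double `XX'` of `X`: on the underlying set `X ⊕ X`,
the topology generated by all singletons `{x'}` for `x ∈ X` together with all sets
`(U ∪ U') \ F'` for `U` open in `X` and `F'` a finite set of points of the second summand. -/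
def alexandroffDoubleTop (X : Type*) [TopologicalSpace X] :
    TopologicalSpace (X ⊕ X) :=
  TopologicalSpace.generateFrom
    ({S | ∃ x : X, S = {Sum.inr x}} ∪
     {S | ∃ (U : Set X) (F : Set (X ⊕ X)), IsOpen U ∧ F.Finite ∧ F ⊆ Set.range Sum.inr ∧
        S = ((Sum.inl '' U) ∪ (Sum.inr '' U)) \ F})

/-- Type synonym for the Alexandroff double of the line. -/
def ADR : Type := ℝ ⊕ ℝ

instance instTopADR : TopologicalSpace ADR := alexandroffDoubleTop ℝ

instance instTopHomADR : TopologicalSpace (ADR ≃ₜ ADR) := homPTop ADR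

namespace ADR

def l (x : ℝ) : ADR := Sum.inl x
def r (x : ℝ) : ADR := Sum.inr x
def p (z : ADR) : ℝ := Sum.elim id id z

theorem cases' (z : ADR) : (∃ x, z = l x) ∨ (∃ x, z = r x) := by
  rcases z with x | x
  · exact Or.inl ⟨x, rfl⟩
  · exact Or.inr ⟨x, rfl⟩

theorem p_l (x : ℝ) : p (l x) = x := rfl

theorem l_ne_r (x y : ℝ) : l x ≠ r y := by
  intro h
  exact Sum.inl_ne_inr h

theorem open_r (x : ℝ) : IsOpen ({r x} : Set ADR) :=
  TopologicalSpace.isOpen_generateFrom_of_mem (Or.inl ⟨x, rfl⟩)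

theorem cont_l : Continuous l := by
  refine continuous_generateFrom_iff.2 ?_
  rintro S (⟨x, rfl⟩ | ⟨U, F, hU, -, hF, rfl⟩)
  · convert isOpen_empty
    ext y
    constructor
    · intro h
      exact (l_ne_r y x h).elim
    · intro h
      exact h.elim
  · convert hU
    ext y
    constructor
    · rintro ⟨⟨z, hz, h⟩ | ⟨z, hz, h⟩, -⟩
      · rw [← Sum.inl_injective h]
        exact hz
      · exact (l_ne_r y z h.symm).elim
    · intro h
      refine ⟨Or.inl ⟨y, h, rfl⟩, fun h' => ?_⟩
      obtain ⟨z, hz⟩ := hF h'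
      exact l_ne_r y z hz.symm

theorem cont_p : Continuous p := by
  refine ⟨fun U hU => ?_⟩
  refine TopologicalSpace.isOpen_generateFrom_of_mem (Or.inr ⟨U, ∅, hU, Set.finite_empty,
    Set.empty_subset _, ?_⟩)
  ext z
  rcases z with x | x
  · constructor
    · intro h
      exact ⟨Or.inl ⟨x, h, rfl⟩, fun h => h⟩
    · rintro ⟨⟨y, hy, h⟩ | ⟨y, hy, h⟩, -⟩
      · cases h
        exact hy
      · cases h
  · constructor
    · intro h
      exact ⟨Or.inr ⟨x, h, rfl⟩, fun h => h⟩
    · rintro ⟨⟨y, hy, h⟩ | ⟨y, hy, h⟩, -⟩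
      · cases h
      · cases h
        exact hy

theorem not_open_l (x : ℝ) : ¬ IsOpen ({l x} : Set ADR) := by
  intro h
  have h2 := h.preimage cont_l
  have : l ⁻¹' {l x} = {x} := by
    ext y
    constructor
    · intro h
      exact Sum.inl_injective h
    · rintro rfl
      rfl
  rw [this] at h2
  exact not_isOpen_singleton x h2

theorem map_r (h : ADR ≃ₜ ADR) (x : ℝ) : ∃ y, h (r x) = r y := by
  rcases cases' (h (r x)) with ⟨y, hy⟩ | hy
  · have := h.isOpenMap _ (open_r x)
    rw [Set.image_singleton, hy] at this
    exact (not_open_l y this).elim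
  · exact hy

/-- The induced map on the line. -/
def f (h : ADR ≃ₜ ADR) (x : ℝ) : ℝ := p (h (l x))

theorem map_l (h : ADR ≃ₜ ADR) (x : ℝ) : h (l x) = l (f h x) := by
  rcases cases' (h (l x)) with ⟨y, hy⟩ | ⟨y, hy⟩
  · rw [f, hy, p_l]
  · obtain ⟨z, hz⟩ := map_r h.symm y
    rw [← hy, h.symm_apply_apply] at hz
    exact (l_ne_r _ _ hz).elim

theorem f_symm (h : ADR ≃ₜ ADR) (x : ℝ) : f h.symm (f h x) = x := by
  rw [f, ← map_l, h.symm_apply_apply, p_l]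

theorem f_symm' (h : ADR ≃ₜ ADR) (x : ℝ) : f h (f h.symm x) = x := by
  rw [f, ← map_l, h.apply_symm_apply, p_l]

theorem f_cont (h : ADR ≃ₜ ADR) : Continuous (f h) :=
  cont_p.comp (h.continuous.comp cont_l)

theorem f_inj (h : ADR ≃ₜ ADR) : Function.Injective (f h) :=
  Function.LeftInverse.injective (f_symm h)

theorem f_btw (h : ADR ≃ₜ ADR) {x a b : ℝ} (hx : x ∈ Set.uIcc a b) :
    f h x ∈ Set.uIcc (f h a) (f h b) := by
  rw [Set.mem_uIcc] at *
  rcases (f_cont h).strictMono_of_inj (f_inj h) with hm | hm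
  · rw [hm.le_iff_le, hm.le_iff_le, hm.le_iff_le, hm.le_iff_le]
    exact hx
  · rw [hm.le_iff_ge, hm.le_iff_ge, hm.le_iff_ge, hm.le_iff_ge]
    tauto

theorem eval_cont (z : ADR) : Continuous (fun h : ADR ≃ₜ ADR => h z) :=
  (continuous_apply z).comp (continuous_induced_dom (f := fun h : ADR ≃ₜ ADR => (h : ADR → ADR)))

theorem f_eval_cont (x : ℝ) : Continuous (fun h : ADR ≃ₜ ADR => f h x) :=
  cont_p.comp (eval_cont (l x))

theorem ev_eq (h₀ : ADR ≃ₜ ADR) (x : ℝ) : ∀ᶠ h in 𝓝 h₀, h (r x) = h₀ (r x) := by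
  obtain ⟨y, hy⟩ := map_r h₀ x
  rw [hy]
  exact (eval_cont (r x)).continuousAt.eventually_mem
    ((open_r y).mem_nhds (by rw [hy]; rfl))

theorem f_joint : Continuous (fun q : (ADR ≃ₜ ADR) × ℝ => f q.1 q.2) := by
  rw [continuous_iff_continuousAt]
  rintro ⟨h₀, x₀⟩
  rw [ContinuousAt, Metric.tendsto_nhds]
  intro ε hε
  obtain ⟨δ, hδ, H⟩ := Metric.continuous_iff.1 (f_cont h₀) x₀ ε hε
  have key : ∀ c, dist c x₀ < δ →
      ∀ᶠ q : (ADR ≃ₜ ADR) × ℝ in 𝓝 (h₀, x₀), dist (f q.1 c) (f h₀ x₀) < ε := by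
    intro c hc
    have h1 : Continuous (fun q : (ADR ≃ₜ ADR) × ℝ => f q.1 c) :=
      (f_eval_cont c).comp continuous_fst
    exact (h1.dist continuous_const).continuousAt.eventually_lt_const (H c hc)
  have ha := key (x₀ - δ / 2) (by rw [Real.dist_eq, abs_lt]; constructor <;> linarith)
  have hb := key (x₀ + δ / 2) (by rw [Real.dist_eq, abs_lt]; constructor <;> linarith)
  have hx : ∀ᶠ q : (ADR ≃ₜ ADR) × ℝ in 𝓝 (h₀, x₀), q.2 ∈ Set.Icc (x₀ - δ / 2) (x₀ + δ / 2) :=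
    continuous_snd.continuousAt.eventually_mem
      (Icc_mem_nhds (by simp only []; linarith) (by simp only []; linarith))
  filter_upwards [ha, hb, hx] with q ha hb hx
  have := f_btw q.1 (Set.Icc_subset_uIcc hx)
  rw [Real.dist_eq, abs_lt] at *
  rw [Set.mem_uIcc] at this
  constructor <;> rcases this with h | h <;> linarith [h.1, h.2]

theorem f_symm_cont (x : ℝ) : Continuous (fun h : ADR ≃ₜ ADR => f h.symm x) := by
  rw [continuous_iff_continuousAt]
  intro h₀
  rw [ContinuousAt, Metric.tendsto_nhds]
  intro ε hε
  set c := f h₀.symm x with hc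
  have hcx : f h₀ c = x := f_symm' h₀ x
  have main : ∀ᶠ h in 𝓝 h₀, x ∈ Set.uIcc (f h (c - ε / 2)) (f h (c + ε / 2)) := by
    rcases (f_cont h₀).strictMono_of_inj (f_inj h₀) with hm | hm
    · have h1 : f h₀ (c - ε / 2) < x := by rw [← hcx]; exact hm (by linarith)
      have h2 : x < f h₀ (c + ε / 2) := by rw [← hcx]; exact hm (by linarith)
      filter_upwards [(f_eval_cont (c - ε / 2)).continuousAt.eventually_lt_const h1,
        (f_eval_cont (c + ε / 2)).continuousAt.eventually_const_lt h2] with h h1 h2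
      exact Set.mem_uIcc.2 (Or.inl ⟨h1.le, h2.le⟩)
    · have h1 : x < f h₀ (c - ε / 2) := by rw [← hcx]; exact hm (by linarith)
      have h2 : f h₀ (c + ε / 2) < x := by rw [← hcx]; exact hm (by linarith)
      filter_upwards [(f_eval_cont (c - ε / 2)).continuousAt.eventually_const_lt h1,
        (f_eval_cont (c + ε / 2)).continuousAt.eventually_lt_const h2] with h h1 h2
      exact Set.mem_uIcc.2 (Or.inr ⟨h2.le, h1.le⟩)
  filter_upwards [main] with h hx
  have := f_btw h.symm hx
  rw [f_symm, f_symm, Set.mem_uIcc] at this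
  rw [Real.dist_eq, abs_lt]
  constructor <;> rcases this with h | h <;> linarith [h.1, h.2]

theorem isTop : IsTopGroupHomP ADR := by
  constructor
  · refine continuous_induced_rng.2 (continuous_pi fun z => ?_)
    rcases cases' z with ⟨x, rfl⟩ | ⟨x, rfl⟩
    · have : Continuous (fun q : (ADR ≃ₜ ADR) × (ADR ≃ₜ ADR) => l (f q.1 (f q.2 x))) :=
        cont_l.comp (f_joint.comp
          (continuous_fst.prodMk ((f_eval_cont x).comp continuous_snd)))
      refine this.congr fun q => ?_
      rw [← map_l, ← map_l]
      rfl
    · rw [continuous_iff_continuousAt]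
      rintro ⟨h₁, h₂⟩
      have h : Continuous (fun q : (ADR ≃ₜ ADR) × (ADR ≃ₜ ADR) => q.1 (h₂ (r x))) :=
        (eval_cont _).comp continuous_fst
      refine h.continuousAt.congr ?_
      have := (continuous_snd.tendsto ((h₁, h₂) : (ADR ≃ₜ ADR) × (ADR ≃ₜ ADR))).eventually
        (ev_eq h₂ x)
      filter_upwards [this] with q hq
      rw [← hq]
      rfl
  · refine continuous_induced_rng.2 (continuous_pi fun z => ?_)
    rcases cases' z with ⟨x, rfl⟩ | ⟨x, rfl⟩
    · refine (cont_l.comp (f_symm_cont x)).congr fun h => ?_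
      exact (map_l h.symm x).symm
    · rw [continuous_iff_continuousAt]
      intro h₀
      obtain ⟨y, hy⟩ := map_r h₀.symm x
      refine (continuousAt_const (y := r y)).congr ?_
      filter_upwards [ev_eq h₀ y] with h hh
      rw [← hy, h₀.apply_symm_apply, hy] at hh
      change r y = h.symm (r x)
      rw [← hh, h.symm_apply_apply]

end ADR

/-- `Hom_p(ℝℝ')` is a topological group, where `ℝℝ'` is the Alexandroff double of the
real line. -/
theorem alexandroffDouble_real_homP_topologicalGroup :
    @IsTopGroupHomP (ℝ ⊕ ℝ) (alexandroffDoubleTop ℝ) := by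
  exact ADR.isTop
end

section
/- For every positive integer n, the plane ℝ² (with its usual Euclidean topology) is strongly n-homogeneous: for any two subsets A, B ⊆ ℝ² with |A| = |B| = n and any bijection h : A → B there exists a self-homeomorphism f of ℝ² whose restriction to A equals h. -/
/-- Vertical shear. -/
noncomputable def vShear (p : Polynomial ℝ) : (ℝ × ℝ) ≃ₜ (ℝ × ℝ) where
  toFun z := (z.1, z.2 + p.eval z.1)
  invFun z := (z.1, z.2 - p.eval z.1)
  left_inv z := by simp
  right_inv z := by simp
  continuous_toFun := by
    have := p.continuous
    fun_prop
  continuous_invFun := by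
    have := p.continuous
    fun_prop

/-- Horizontal shear. -/
noncomputable def hShear (p : Polynomial ℝ) : (ℝ × ℝ) ≃ₜ (ℝ × ℝ) where
  toFun z := (z.1 + p.eval z.2, z.2)
  invFun z := (z.1 - p.eval z.2, z.2)
  left_inv z := by simp
  right_inv z := by simp
  continuous_toFun := by
    have := p.continuous
    fun_prop
  continuous_invFun := by
    have := p.continuous
    fun_prop

lemma exists_generic {ι : Type*} (s : Finset ι) (a : ι → ℝ × ℝ) (ha : Set.InjOn a s) :
    ∃ c : ℝ, Set.InjOn (fun i => (a i).1 + c * (a i).2) s := by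
  classical
  obtain ⟨c, hc⟩ := Infinite.exists_notMem_finset
    ((s ×ˢ s).image fun q => -((a q.1).1 - (a q.2).1) / ((a q.1).2 - (a q.2).2))
  refine ⟨c, fun i hi j hj hij => ?_⟩
  simp only at hij
  by_contra hne
  by_cases h2 : (a i).2 = (a j).2
  · apply hne
    apply ha hi hj
    refine Prod.ext ?_ h2
    rw [h2] at hij
    linarith
  · apply hc
    rw [Finset.mem_image]
    refine ⟨(i, j), Finset.mem_product.2 ⟨hi, hj⟩, ?_⟩
    have h3 : (a i).2 - (a j).2 ≠ 0 := sub_ne_zero.2 h2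
    simp only
    rw [div_eq_iff h3]
    linarith

lemma exists_standard {ι : Type*} (s : Finset ι) (a : ι → ℝ × ℝ) (ha : Set.InjOn a s)
    (u : ι → ℝ) (hu : Set.InjOn u s) :
    ∃ G : (ℝ × ℝ) ≃ₜ (ℝ × ℝ), ∀ i ∈ s, G (a i) = (0, u i) := by
  classical
  obtain ⟨c, hc⟩ := exists_generic s a ha
  set v : ι → ℝ := fun i => (a i).1 + c * (a i).2 with hv
  let p := Lagrange.interpolate s v (fun i => u i - (a i).2)
  let q := Lagrange.interpolate s u (fun i => - v i)
  refine ⟨((hShear (Polynomial.C c * Polynomial.X)).trans (vShear p)).trans (hShear q),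
    fun i hi => ?_⟩
  have h1 : hShear (Polynomial.C c * Polynomial.X) (a i) = (v i, (a i).2) := by
    simp [hShear, hv]
  have h2 : vShear p (v i, (a i).2) = (v i, u i) := by
    have : p.eval (v i) = u i - (a i).2 := Lagrange.eval_interpolate_at_node _ hc hi
    simp [vShear, this]
  have h3 : hShear q (v i, u i) = (0, u i) := by
    have : q.eval (u i) = - v i := Lagrange.eval_interpolate_at_node _ hu hi
    simp [hShear, this]
  simp only [Homeomorph.trans_apply, h1, h2, h3]

/-- For every positive integer `n`, the plane `ℝ²` is strongly `n`-homogeneous. -/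
theorem plane_stronglyNHomogeneous : ∀ n : ℕ, 0 < n → StronglyNHomogeneous (ℝ × ℝ) n := by
  intro n hn A B hA _ h hh
  have hfin : A.Finite := Set.finite_of_ncard_pos (by omega)
  obtain ⟨s, rfl⟩ := hfin.exists_finset_coe
  obtain ⟨c, hc⟩ := exists_generic s id Function.injective_id.injOn
  obtain ⟨F, hF⟩ := exists_standard s id Function.injective_id.injOn _ hc
  obtain ⟨G, hG⟩ := exists_standard s h hh.injOn _ hc
  refine ⟨F.trans G.symm, fun x hx => ?_⟩
  rw [Homeomorph.trans_apply, Homeomorph.symm_apply_eq, hG x hx]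
  exact hF x hx
end

section
/- Hom_p(ℝ²) is not a topological group: on the group of self-homeomorphisms of the plane ℝ² with the topology of pointwise convergence, it is not the case that composition is jointly continuous and inversion is continuous. -/
open Topology

open Filter

lemma phi_cont (e : ℝ) : Continuous (fun x : ℝ => e * x / (e ^ 2 + x ^ 2)) := by
  by_cases h : e = 0
  · subst h; simpa using continuous_const
  · have : ∀ x : ℝ, e ^ 2 + x ^ 2 ≠ 0 := fun x => by positivity
    fun_prop (disch := assumption)

/-- The shear along the second coordinate. -/
noncomputable def shear (e : ℝ) : (ℝ × ℝ) ≃ₜ (ℝ × ℝ) where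
  toFun p := (p.1, p.2 + e * p.1 / (e ^ 2 + p.1 ^ 2))
  invFun p := (p.1, p.2 - e * p.1 / (e ^ 2 + p.1 ^ 2))
  left_inv p := by simp
  right_inv p := by simp
  continuous_toFun :=
    continuous_fst.prodMk (continuous_snd.add ((phi_cont e).comp continuous_fst))
  continuous_invFun :=
    continuous_fst.prodMk (continuous_snd.sub ((phi_cont e).comp continuous_fst))

lemma tendsto_homP {ι : Type*} {l : Filter ι} {F : ι → ((ℝ × ℝ) ≃ₜ (ℝ × ℝ))}
    {g : (ℝ × ℝ) ≃ₜ (ℝ × ℝ)} :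
    Tendsto F l (@nhds _ (homPTop (ℝ × ℝ)) g) ↔ ∀ x, Tendsto (fun i => F i x) l (𝓝 (g x)) := by
  unfold homPTop
  rw [nhds_induced, tendsto_comap_iff, tendsto_pi_nhds]
  rfl

lemma shear_tendsto : Tendsto shear (𝓝[≠] 0)
    (@nhds _ (homPTop (ℝ × ℝ)) (Homeomorph.refl (ℝ × ℝ))) := by
  rw [tendsto_homP]
  rintro ⟨x, y⟩
  apply tendsto_nhdsWithin_of_tendsto_nhds
  have h : Tendsto (fun e : ℝ => e * x / (e ^ 2 + x ^ 2)) (𝓝 0) (𝓝 0) := by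
    by_cases hx : x = 0
    · subst hx; simp
    · have h0 : (0 : ℝ) ^ 2 + x ^ 2 ≠ 0 := by positivity
      have : ContinuousAt (fun e : ℝ => e * x / (e ^ 2 + x ^ 2)) 0 := by
        fun_prop (disch := assumption)
      simpa [ContinuousAt] using this
  have h2 := (tendsto_const_nhds (x := x)).prodMk_nhds ((tendsto_const_nhds (x := y)).add h)
  simpa [shear] using h2

lemma transl_tendsto :
    Tendsto (fun e : ℝ => Homeomorph.addRight ((e, 0) : ℝ × ℝ)) (𝓝[≠] 0)
    (@nhds _ (homPTop (ℝ × ℝ)) (Homeomorph.refl (ℝ × ℝ))) := by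
  rw [tendsto_homP]
  rintro ⟨x, y⟩
  apply tendsto_nhdsWithin_of_tendsto_nhds
  have : Continuous (fun e : ℝ => (x + e, y)) := by fun_prop
  simpa using this.tendsto 0

/-- `Hom_p(ℝ²)` is not a topological group: on the self-homeomorphism group of the plane
with the topology of pointwise convergence, it is not the case that composition is jointly
continuous and inversion is continuous. -/
theorem plane_homP_not_topologicalGroup :
    ¬ (Continuous[@instTopologicalSpaceProd _ _ (homPTop (ℝ × ℝ)) (homPTop (ℝ × ℝ)),
          homPTop (ℝ × ℝ)]
        (fun p : ((ℝ × ℝ) ≃ₜ (ℝ × ℝ)) × ((ℝ × ℝ) ≃ₜ (ℝ × ℝ)) => p.2.trans p.1) ∧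
       Continuous[homPTop (ℝ × ℝ), homPTop (ℝ × ℝ)]
        (fun f : (ℝ × ℝ) ≃ₜ (ℝ × ℝ) => f.symm)) := by
  rintro ⟨hc, -⟩
  have h1 := (@Continuous.tendsto _ _ (@instTopologicalSpaceProd _ _ (homPTop (ℝ × ℝ))
    (homPTop (ℝ × ℝ))) (homPTop (ℝ × ℝ)) _ hc
    (Homeomorph.refl (ℝ × ℝ), Homeomorph.refl (ℝ × ℝ)))
  rw [@nhds_prod_eq _ _ (homPTop (ℝ × ℝ)) (homPTop (ℝ × ℝ))] at h1
  have h2 := h1.comp (shear_tendsto.prodMk transl_tendsto)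
  have h3 := (continuous_snd.tendsto _).comp (tendsto_homP.1 h2 (0, 0))
  have h4 : Tendsto (fun _ : ℝ => (1 / 2 : ℝ)) (𝓝[≠] 0) (𝓝 0) := by
    refine Tendsto.congr' ?_ h3
    filter_upwards [self_mem_nhdsWithin] with e he
    have he : e ≠ 0 := he
    simp [shear]
    field_simp
    norm_num
  have := tendsto_nhds_unique h4 tendsto_const_nhds
  norm_num at this
end

section
/- For every positive integer n, the space ℚ of rational numbers (with the subspace topology inherited from ℝ) is strongly n-homogeneous: for any two subsets A, B ⊆ ℚ with |A| = |B| = n and any bijection h : A → B there exists a self-homeomorphism f of ℚ whose restriction to A equals h. -/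
theorem rat_clopen_aux (a : ℚ) (r : ℝ) (hr : Irrational r) :
    IsClopen {x : ℚ | dist x a < r} := by
  refine ⟨?_, isOpen_lt (by fun_prop) (by fun_prop)⟩
  have : {x : ℚ | dist x a < r} = {x : ℚ | dist x a ≤ r} := by
    ext x
    simp only [Set.mem_ofPred_eq]
    refine ⟨le_of_lt, fun h => lt_of_le_of_ne h ?_⟩
    intro he
    apply hr
    refine ⟨|x - a|, ?_⟩
    rw [← he, Rat.dist_eq]
    push_cast
    rfl
  rw [this]
  exact isClosed_le (by fun_prop) (by fun_prop)

theorem rat_move_aux (F : Set ℚ) (hF : F.Finite) (a b : ℚ) (ha : a ∉ F) (hb : b ∉ F) :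
    ∃ g : ℚ ≃ₜ ℚ, g a = b ∧ ∀ x ∈ F, g x = x := by
  classical
  by_cases hab : a = b
  · exact ⟨Homeomorph.refl ℚ, by simp [hab]⟩
  obtain ⟨e1, he1, h1⟩ := Metric.isOpen_iff.1 hF.isClosed.isOpen_compl a ha
  obtain ⟨e2, he2, h2⟩ := Metric.isOpen_iff.1 hF.isClosed.isOpen_compl b hb
  have hd : 0 < dist a b := dist_pos.2 hab
  obtain ⟨r, hr, hr0, hr1⟩ := exists_irrational_btwn
    (show (0:ℝ) < min (min e1 e2) (dist a b / 2) by positivity)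
  simp only [lt_min_iff] at hr1
  obtain ⟨⟨hr1, hr2⟩, hr3⟩ := hr1
  have hdisj : ∀ x, dist x a < r → ¬ dist x b < r := by
    intro x hx hy
    have := dist_triangle_left a b x
    linarith
  let g : ℚ → ℚ := fun x => if dist x a < r then x + (b - a) else
    if dist x b < r then x + (a - b) else x
  have e1' : ∀ x, dist (x + (b - a)) b = dist x a := by
    intro x; rw [Rat.dist_eq, Rat.dist_eq]; push_cast; congr 1; ring
  have e2' : ∀ x, dist (x + (a - b)) a = dist x b := by
    intro x; rw [Rat.dist_eq, Rat.dist_eq]; push_cast; congr 1; ring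
  have hinv : Function.Involutive g := by
    intro x
    by_cases hx : dist x a < r
    · have h3 : dist (x + (b - a)) b < r := by rw [e1']; exact hx
      have h4 : ¬ dist (x + (b - a)) a < r := fun h => hdisj _ h h3
      simp only [g, if_pos hx, if_neg h4, if_pos h3]; ring
    · by_cases hy : dist x b < r
      · have h3 : dist (x + (a - b)) a < r := by rw [e2']; exact hy
        simp only [g, if_neg hx, if_pos hy, if_pos h3]; ring
      · simp only [g, if_neg hx, if_neg hy]
  have hc : Continuous g := by
    refine Continuous.if ?_ (by fun_prop) (Continuous.if ?_ (by fun_prop) (by fun_prop))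
    · intro x hx
      rw [(rat_clopen_aux a r hr).frontier_eq] at hx
      exact hx.elim
    · intro x hx
      rw [(rat_clopen_aux b r hr).frontier_eq] at hx
      exact hx.elim
  refine ⟨⟨hinv.toPerm g, hc, hc⟩, ?_, ?_⟩
  · change g a = b
    have : dist a a < r := by simpa using hr0
    simp only [g, if_pos this]; ring
  · intro x hx
    change g x = x
    have h3 : ¬ dist x a < r := fun h => h1 (Metric.mem_ball.2 (h.trans hr1)) hx
    have h4 : ¬ dist x b < r := fun h => h2 (Metric.mem_ball.2 (h.trans hr2)) hx
    simp only [g, if_neg h3, if_neg h4]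

/-- For every positive integer `n`, the space `ℚ` of rationals is strongly
`n`-homogeneous. -/
theorem rat_stronglyNHomogeneous : ∀ n : ℕ, 0 < n → StronglyNHomogeneous ℚ n := by
  intro n hn A B hA _ h hh
  have hfin : A.Finite := Set.finite_of_ncard_pos (by omega)
  have hinj := hh.injOn
  clear hh hA
  induction A, hfin using Set.Finite.induction_on with
  | empty => exact ⟨Homeomorph.refl ℚ, by simp⟩
  | @insert a s has hs ih =>
    obtain ⟨f, hf⟩ := ih (hinj.mono (Set.subset_insert a s))
    obtain ⟨g, hg, hgF⟩ := rat_move_aux (h '' s) (hs.image h) (f a) (h a)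
      (by
        rintro ⟨x, hx, hxa⟩
        rw [← hf hx] at hxa
        exact has (f.injective hxa ▸ hx))
      (by
        rintro ⟨x, hx, hxa⟩
        have := hinj (Set.mem_insert_of_mem a hx) (Set.mem_insert a s) hxa
        exact has (this ▸ hx))
    refine ⟨f.trans g, ?_⟩
    intro x hx
    rcases hx with rfl | hx
    · simpa using hg
    · have h5 : f x = h x := hf hx
      simp only [Homeomorph.trans_apply, h5]
      exact hgF _ ⟨x, hx, rfl⟩
end

section
/- Every subspace of an ordinal is locally unique at each of its points: if S is a set of ordinals endowed with the topology inherited from the order topology on the ordinals, then for every x ∈ S there exists an open neighborhood O of x in S such that no self-homeomorphism of S maps x to a point of O \ {x}. -/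
/-- Every subspace of the ordinals (with the subspace topology inherited from the order
topology) is locally unique at each of its points: no self-homeomorphism of the subspace
maps a point to a nearby distinct point. -/
theorem ordinal_subspace_locallyUnique (S : Set Ordinal) (x : S) :
    LocallyUniqueAt S x := by
  -- the least point of the orbit of `x` is locally unique, hence so is `x`
  obtain ⟨m, ⟨f, hf⟩, hmin⟩ := WellFounded.has_min (wellFounded_lt (α := S))
    {y : S | ∃ f : S ≃ₜ S, f x = y} ⟨x, Homeomorph.refl _, rfl⟩
  refine ⟨f ⁻¹' (Subtype.val ⁻¹' Set.Iio (Order.succ (m : Ordinal))),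
    (isOpen_Iio.preimage continuous_subtype_val).preimage f.continuous, ?_, ?_⟩
  · simp [hf]
  · rintro y ⟨hy, hyx⟩ g rfl
    have h1 : ((f (g x) : S) : Ordinal) ≤ m := Order.lt_succ_iff.mp hy
    have h2 := hmin (f (g x)) ⟨g.trans f, rfl⟩
    have h3 : f (g x) = m := le_antisymm h1 (not_lt.mp h2)
    exact hyx (f.injective (h3.trans hf.symm))
end
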